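/- arXiv:2208.14596 — 10 statements merged into one kernel-verified Lean document; each statement's English description precedes it below -/
import Mathlib

section
/- Let d ≥ 1, let ρ be a d×d complex matrix, let k ≥ 1, and let π be the cyclic permutation of Fin k sending i to i+1 (mod k). Then the trace of the matrix product W(π) * ρ^{⊗k} equals tr(ρ^k), the trace of the k-th matrix power of ρ. -/
/-! Carrying out the sum against the 0-1 matrix `W(π)` gives
`tr (W(π) ρ^{⊗k}) = ∑ y, ∏ i, ρ (y i) (y (π i))` for every permutation `π`
(`trace_permOp_mul_tensorPow`). For the cyclic shift this is the sum of the weights of all closed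
walks of length `k`, which is `tr (ρ ^ k)` by the expansion of the entries of a matrix power as
sums over walks (`pow_succ_apply_eq_sum_walks`). The two are matched by `Fin.snoc_eq_cons_rotate`:
if `y` lists the sources of a closed walk from `a`, then `y ∘ finRotate` lists its targets. -/

open Matrix

/-- The `ι`-fold tensor power of a matrix `ρ`, with entries `∏ i, ρ (x i) (y i)`. -/
noncomputable def tensorPow {d : ℕ} (ρ : Matrix (Fin d) (Fin d) ℂ) (ι : Type) [Fintype ι] :
    Matrix (ι → Fin d) (ι → Fin d) ℂ :=
  Matrix.of fun x y => ∏ i, ρ (x i) (y i)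

/-- The permutation operator `W(π)` acting on the tensor factors. -/
def permOp (d : ℕ) {ι : Type} [Fintype ι] [DecidableEq ι] (π : Equiv.Perm ι) :
    Matrix (ι → Fin d) (ι → Fin d) ℂ :=
  Matrix.of fun x y => if x = y ∘ π then 1 else 0

/-- A matrix power as a sum over walks: `v` lists the `n` interior vertices of a walk of length
`n + 1` from `a` to `b`, so `Fin.cons a v` and `Fin.snoc v b` list the sources and the targets
of its steps. -/
lemma pow_succ_apply_eq_sum_walks {d : ℕ} (ρ : Matrix (Fin d) (Fin d) ℂ) (n : ℕ) (a b : Fin d) :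
    (ρ ^ (n + 1)) a b = ∑ v : Fin n → Fin d, ∏ i : Fin (n + 1),
      ρ ((Fin.cons a v : Fin (n + 1) → Fin d) i) ((Fin.snoc v b : Fin (n + 1) → Fin d) i) := by
  induction n generalizing a with
  | zero => simp [Fin.snoc]
  | succ n ih =>
    rw [pow_succ', Matrix.mul_apply, ← (Fin.consEquiv fun _ => Fin d).sum_comp,
      Fintype.sum_prod_type]
    refine Finset.sum_congr rfl fun c _ => ?_
    rw [ih, Finset.mul_sum]
    refine Finset.sum_congr rfl fun v _ => ?_
    change _ = ∏ i : Fin (n + 2),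
      ρ ((Fin.cons a (Fin.cons c v : Fin (n + 1) → Fin d) : Fin (n + 2) → Fin d) i)
        ((Fin.snoc (Fin.cons c v : Fin (n + 1) → Fin d) b : Fin (n + 2) → Fin d) i)
    have h : (Fin.snoc (Fin.cons c v : Fin (n + 1) → Fin d) b : Fin (n + 2) → Fin d) =
        Fin.cons c (Fin.snoc v b : Fin (n + 1) → Fin d) :=
      (Fin.cons_snoc_eq_snoc_cons c v b).symm
    rw [h, Fin.prod_univ_succ (n := n + 1)]
    simp only [Fin.cons_zero, Fin.cons_succ]

lemma trace_permOp_mul_tensorPow {d k : ℕ} (π : Equiv.Perm (Fin k))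
    (ρ : Matrix (Fin d) (Fin d) ℂ) :
    (permOp d π * tensorPow ρ (Fin k)).trace = ∑ y : Fin k → Fin d, ∏ i, ρ (y i) (y (π i)) := by
  simp only [Matrix.trace, Matrix.diag_apply, Matrix.mul_apply, permOp, tensorPow, Matrix.of_apply]
  rw [Finset.sum_comm]
  simp [ite_mul]

theorem trace_permOp_cyclic_tensorPow (d k : ℕ) (hd : 1 ≤ d) (hk : 1 ≤ k)
    (ρ : Matrix (Fin d) (Fin d) ℂ) :
    (permOp d (finRotate k) * tensorPow ρ (Fin k)).trace = (ρ ^ k).trace := by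
  obtain ⟨n, rfl⟩ : ∃ n, k = n + 1 := ⟨k - 1, by omega⟩
  rw [trace_permOp_mul_tensorPow, ← (Fin.consEquiv fun _ => Fin d).sum_comp,
    Fintype.sum_prod_type]
  simp only [Matrix.trace, Matrix.diag_apply, pow_succ_apply_eq_sum_walks, Fin.consEquiv_apply,
    Fin.snoc_eq_cons_rotate]
end

section
/- Let d ≥ 1, let ρ be a d×d complex matrix, let k ≥ 1, and let π be any permutation of Fin k. Then the trace of the matrix product W(π) * ρ^{⊗k} equals ∏_{j=1}^{k} (tr(ρ^j))^{c_j(π)}, where c_j(π) is the number of cycles of length j in the disjoint cycle decomposition of π (counting fixed points as 1-cycles). -/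
/-!
The trace expands to `∑ y, ∏ i, ρ (y i) (y (π i))`. Choosing a base point on each cycle and
enumerating the cycle as `a, π a, π² a, …` identifies the index set with `Σ q, Fin (n q)`, where `q`
runs over the cycles, `n q` is the length of `q`, and `π` acts by rotation on each fibre
(`exists_cycle_equiv`). The sum therefore factors over the cycles, and the factor of a cycle of
length `n` is a sum over closed walks of length `n`, i.e. `tr (ρ ^ n)` (`sum_prod_finRotate`).
Grouping cycles by length gives the formula: a cycle of length `j` contributes `j` points to the set
counted in `cycleCount π j`, so the division by `j` there is exact (`cycleCount_eq`).
-/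

open Matrix

/-- `cycleCount π j` is the number of cycles of length `j` in the disjoint cycle
decomposition of `π`, counting fixed points as 1-cycles. -/
def cycleCount {α : Type*} [Fintype α] [DecidableEq α] (π : Equiv.Perm α) (j : ℕ) : ℕ :=
  (Finset.univ.filter fun x : α =>
    (Finset.univ.filter fun y : α => π.SameCycle x y).card = j).card / j

/-- Sum over walks of length `n`, weighted by a function `g` of the endpoints. -/
theorem sum_walk {α : Type*} [Fintype α] [DecidableEq α] (ρ : Matrix α α ℂ) (n : ℕ)
    (g : α → α → ℂ) :
    ∑ y : Fin (n + 1) → α, g (y 0) (y (Fin.last n)) * ∏ t : Fin n, ρ (y t.castSucc) (y t.succ)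
      = ∑ a, ∑ b, g a b * (ρ ^ n) a b := by
  induction n generalizing g with
  | zero =>
    rw [← (Equiv.funUnique (Fin 1) α).symm.sum_comp]
    simp [Matrix.one_apply]
  | succ n ih =>
    rw [← (Fin.consEquiv fun _ => α).sum_comp, Fintype.sum_prod_type]
    refine Finset.sum_congr rfl fun a _ => ?_
    have h := ih fun u v => g a v * ρ a u
    simp only [Fin.consEquiv_apply, Fin.prod_univ_succ, Fin.castSucc_zero, Fin.cons_zero,
      Fin.cons_succ, ← Fin.succ_last, ← Fin.succ_castSucc, ← mul_assoc]
    rw [h, Finset.sum_comm]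
    refine Finset.sum_congr rfl fun b _ => ?_
    rw [pow_succ', Matrix.mul_apply, Finset.mul_sum]
    exact Finset.sum_congr rfl fun u _ => by ring

/-- The contribution of a single cycle: the sum over closed walks of length `n` is `tr (ρ ^ n)`. -/
theorem sum_prod_finRotate {α : Type*} [Fintype α] [DecidableEq α] (ρ : Matrix α α ℂ) (n : ℕ)
    (hn : 0 < n) :
    ∑ y : Fin n → α, ∏ t : Fin n, ρ (y t) (y (finRotate n t)) = (ρ ^ n).trace := by
  obtain ⟨m, rfl⟩ : ∃ m, n = m + 1 := ⟨n - 1, by omega⟩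
  have h := sum_walk ρ m fun a b => ρ b a
  simp only [Fin.prod_univ_castSucc, finRotate_apply, Fin.coeSucc_eq_succ,
    Fin.last_add_one]
  rw [pow_succ, Matrix.trace]
  simp only [Matrix.diag_apply, Matrix.mul_apply]
  simp only [mul_comm] at h ⊢
  exact h

/-- The number of points on the cycle of `π` through `x`. -/
def cycleLen {ι : Type*} [Fintype ι] [DecidableEq ι] (π : Equiv.Perm ι) (x : ι) : ℕ :=
  (Finset.univ.filter fun y : ι => π.SameCycle x y).card

/-- The set of cycles of `π`, fixed points included. -/
abbrev Cycles {ι : Type*} (π : Equiv.Perm ι) : Type _ :=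
  Quotient (Equiv.Perm.SameCycle.setoid π)

/-- The cycle of `π` through `x`. -/
abbrev toCycle {ι : Type*} (π : Equiv.Perm ι) (x : ι) : Cycles π :=
  Quotient.mk (Equiv.Perm.SameCycle.setoid π) x

theorem toCycle_eq_iff {ι : Type*} (π : Equiv.Perm ι) (x y : ι) :
    toCycle π x = toCycle π y ↔ π.SameCycle x y :=
  Quotient.eq

section

variable {ι : Type*} [Fintype ι] [DecidableEq ι] (π : Equiv.Perm ι)

theorem cycleLen_pos (x : ι) : 0 < cycleLen π x :=
  Finset.card_pos.2 ⟨x, by simp [Equiv.Perm.SameCycle.refl]⟩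

theorem cycleLen_congr {x y : ι} (h : π.SameCycle x y) : cycleLen π x = cycleLen π y := by
  unfold cycleLen
  congr 1
  ext z
  simp only [Finset.mem_filter, Finset.mem_univ, true_and]
  exact ⟨fun hz => h.symm.trans hz, fun hz => h.trans hz⟩

/-- The cycle through `a` is enumerated by `t ↦ π ^ t a`, and `π` acts on it by rotation. -/
theorem exists_cycle_equiv (q : Cycles π) :
    ∃ e : Fin (cycleLen π q.out) ≃ {i // toCycle π i = q},
      ∀ t, π (e t).1 = (e (finRotate _ t)).1 := by
  set a := q.out with ha
  have hq : toCycle π a = q := Quotient.out_eq q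
  let s : Finset ι := Finset.univ.filter fun y => π.SameCycle a y
  have has : a ∈ s := by simp [s, Equiv.Perm.SameCycle.refl]
  have hs : π.IsCycleOn (s : Set ι) := by
    refine ⟨⟨fun x hx => ?_, π.injective.injOn, fun x hx => ⟨π⁻¹ x, ?_, by simp⟩⟩,
      fun x hx y hy => ?_⟩
    · simpa [s] using hx
    · simpa [s] using hx
    · simp only [s, Finset.coe_filter, Finset.mem_univ, true_and, Set.mem_ofPred_eq] at hx hy
      exact hx.symm.trans hy
  have hmem : ∀ t : ℕ, toCycle π ((π ^ t) a) = q := fun t => by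
    rw [← hq, toCycle_eq_iff]
    simp [Equiv.Perm.SameCycle.refl]
  let f : Fin (cycleLen π a) → {i // toCycle π i = q} := fun t => ⟨(π ^ (t : ℕ)) a, hmem t⟩
  have hf : Function.Bijective f := by
    constructor
    · intro t u h
      have h' : (π ^ (t : ℕ)) a = (π ^ (u : ℕ)) a := congrArg Subtype.val h
      exact Fin.ext (((hs.pow_apply_eq_pow_apply has).1 h').eq_of_lt_of_lt t.2 u.2)
    · rintro ⟨i, hi⟩
      rw [← hq, toCycle_eq_iff] at hi
      obtain ⟨t, ht, h⟩ := hs.exists_pow_eq has (b := i) (by simpa [s] using hi.symm)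
      exact ⟨⟨t, ht⟩, Subtype.ext h⟩
  refine ⟨Equiv.ofBijective f hf, fun t => ?_⟩
  change π ((π ^ (t : ℕ)) a) = (π ^ ((finRotate _ t : Fin _) : ℕ)) a
  rw [← Equiv.Perm.mul_apply, ← pow_succ', hs.pow_apply_eq_pow_apply has]
  change _ ≡ _ [MOD cycleLen π a]
  generalize cycleLen π a = n at t
  obtain _ | m := n
  · exact t.elim0
  · rw [finRotate_apply, Fin.val_add_one]
    split_ifs with h
    · subst h
      simp [Nat.ModEq]
    · rfl

open Classical in
/-- Each cycle of length `j` contains `j` of the points counted in the definition. -/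
theorem cycleCount_eq (j : ℕ) (hj : 0 < j) :
    cycleCount π j
      = (Finset.univ.filter fun q : Cycles π => cycleLen π q.out = j).card := by
  have hlen : ∀ x : ι, cycleLen π (toCycle π x).out = cycleLen π x := fun x =>
    cycleLen_congr π ((toCycle_eq_iff π _ _).1 (Quotient.out_eq _))
  unfold cycleCount
  refine Nat.div_eq_of_eq_mul_left hj ?_
  change (Finset.univ.filter fun x : ι => cycleLen π x = j).card = _
  rw [Finset.card_eq_sum_card_fiberwise (f := toCycle π)
    (t := Finset.univ.filter fun q : Cycles π => cycleLen π q.out = j)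
    (fun x hx => by simpa [hlen] using hx)]
  refine Finset.sum_const_nat fun q hq => ?_
  simp only [Finset.mem_filter, Finset.mem_univ, true_and] at hq
  refine Eq.trans (congrArg Finset.card (Finset.ext fun x => ?_)) hq
  simp only [Finset.mem_filter, Finset.mem_univ, true_and, ← toCycle_eq_iff]
  have hout : toCycle π q.out = q := Quotient.out_eq q
  rw [hout]
  constructor
  · rintro ⟨_, h⟩
    exact h.symm
  · rintro rfl
    exact ⟨(hlen x).symm.trans hq, rfl⟩

open Classical in
/-- The sum over labellings of the index set factors over the cycles of `π`. -/
theorem sum_prod_perm {α : Type*} [Fintype α] [DecidableEq α] (ρ : Matrix α α ℂ) :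
    ∑ y : ι → α, ∏ i, ρ (y i) (y (π i))
      = ∏ q : Cycles π, (ρ ^ cycleLen π q.out).trace := by
  choose e he using exists_cycle_equiv π
  let S : (Σ q : Cycles π, Fin (cycleLen π q.out)) ≃ ι :=
    (Equiv.sigmaCongrRight e).trans (Equiv.sigmaFiberEquiv (toCycle π))
  have hS : ∀ q t, π (S ⟨q, t⟩) = S ⟨q, finRotate _ t⟩ := fun q t => he q t
  simp_rw [← sum_prod_finRotate ρ _ (cycleLen_pos π _)]
  rw [Finset.prod_univ_sum, Fintype.piFinset_univ]
  refine Fintype.sum_equiv ((S.symm.arrowCongr (Equiv.refl α)).trans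
    (Equiv.piCurry fun _ _ => α)) _ _ fun y => ?_
  rw [← S.prod_comp, Fintype.prod_sigma]
  refine Finset.prod_congr rfl fun q _ => Finset.prod_congr rfl fun t _ => ?_
  rw [hS]
  rfl

end

theorem trace_permOp_tensorPow (d k : ℕ) (hd : 1 ≤ d) (hk : 1 ≤ k)
    (ρ : Matrix (Fin d) (Fin d) ℂ) (π : Equiv.Perm (Fin k)) :
    (permOp d π * tensorPow ρ (Fin k)).trace
      = ∏ j ∈ Finset.Icc 1 k, ((ρ ^ j).trace) ^ cycleCount π j := by
  classical
  have h1 : (permOp d π * tensorPow ρ (Fin k)).trace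
      = ∑ y : Fin k → Fin d, ∏ i, ρ (y i) (y (π i)) := by
    simp only [Matrix.trace, Matrix.diag_apply, Matrix.mul_apply, permOp, tensorPow,
      Matrix.of_apply, ite_mul, one_mul, zero_mul]
    rw [Finset.sum_comm]
    simp
  rw [h1, sum_prod_perm, ← Finset.prod_fiberwise_of_maps_to
    (g := fun q : Cycles π => cycleLen π q.out) (t := Finset.Icc 1 k)]
  · refine Finset.prod_congr rfl fun j hj => ?_
    rw [cycleCount_eq π j (Finset.mem_Icc.1 hj).1]
    refine Finset.prod_eq_pow_card fun q hq => ?_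
    rw [(Finset.mem_filter.1 hq).2]
  · intro q _
    refine Finset.mem_Icc.2 ⟨cycleLen_pos π _, ?_⟩
    simpa [cycleLen] using Finset.card_le_univ (Finset.univ.filter fun y => π.SameCycle q.out y)
end

section
/- Let d ≥ 1, let ρ be a d×d complex matrix, and let k ≥ 1. Then (1/k!) ∑_{π ∈ S_k} tr(W(π) * ρ^{⊗k}) = ∑_{(a_1,…,a_k) : a_1 + 2a_2 + ⋯ + k·a_k = k} ∏_{j=1}^{k} (tr(ρ^j))^{a_j} / (j^{a_j} · a_j!), where the sum on the right ranges over all tuples of nonnegative integers (a_1,…,a_k) encoding partitions of k, and S_k denotes the group of permutations of Fin k. -/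
open Matrix

/-- The finset of tuples `(a_1, …, a_k)` of nonnegative integers (encoded as `a : Fin k → ℕ`
with `a j` playing the role of `a_{j+1}`) such that `a_1 + 2 a_2 + ⋯ + k a_k = k`.
Any such tuple satisfies `a j ≤ k`, so the enumeration over `Finset.range (k+1)` is exhaustive. -/
def partitionTuples (k : ℕ) : Finset (Fin k → ℕ) :=
  (Fintype.piFinset fun _ : Fin k => Finset.range (k + 1)).filter
    fun a => ∑ j : Fin k, ((j : ℕ) + 1) * a j = k

/-! ### The trace of a permutation operator times a tensor power -/

/-- The sum `∑_y ∏_i ρ (y i) (y (σ i))` over all labellings `y : α → Fin d`, which is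
`tr (W(σ) ρ^{⊗α})`; see `trace_permOp_mul_tensorPow`. -/
noncomputable def permTrace {d : ℕ} (ρ : Matrix (Fin d) (Fin d) ℂ) {α : Type} [Fintype α]
    [DecidableEq α] (σ : Equiv.Perm α) : ℂ :=
  ∑ y : α → Fin d, ∏ i, ρ (y i) (y (σ i))

theorem trace_permOp_mul_tensorPow_s2 {d : ℕ} (ρ : Matrix (Fin d) (Fin d) ℂ) {α : Type}
    [Fintype α] [DecidableEq α] (σ : Equiv.Perm α) :
    (permOp d σ * tensorPow ρ α).trace = permTrace ρ σ := by
  rw [Matrix.trace_mul_comm]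
  simp [permTrace, Matrix.trace, Matrix.mul_apply, permOp, tensorPow]

theorem permTrace_congr {d : ℕ} (ρ : Matrix (Fin d) (Fin d) ℂ) {α β : Type}
    [Fintype α] [DecidableEq α] [Fintype β] [DecidableEq β] (e : α ≃ β)
    (σ : Equiv.Perm α) (τ : Equiv.Perm β) (h : ∀ a, e (σ a) = τ (e a)) :
    permTrace ρ σ = permTrace ρ τ := by
  unfold permTrace
  refine Fintype.sum_equiv (e.arrowCongr (Equiv.refl _)) _ _ fun y => ?_
  refine Fintype.prod_equiv e _ _ fun i => ?_
  simp [← h]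

theorem permTrace_one {d : ℕ} (ρ : Matrix (Fin d) (Fin d) ℂ) (α : Type)
    [Fintype α] [DecidableEq α] :
    permTrace ρ (1 : Equiv.Perm α) = ρ.trace ^ Fintype.card α := by
  simp [permTrace, Matrix.trace, ← Finset.card_univ, ← Finset.prod_const, Finset.prod_univ_sum]

/-- If `p` is a `σ`-stable predicate, a labelling of `α` is a pair of labellings of `p` and of its
complement, and the summand factors accordingly. -/
theorem permTrace_subtype {d : ℕ} (ρ : Matrix (Fin d) (Fin d) ℂ) {α : Type}
    [Fintype α] [DecidableEq α] (σ : Equiv.Perm α) (p : α → Prop) [DecidablePred p]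
    (h : ∀ x, p (σ x) ↔ p x) :
    permTrace ρ σ = permTrace ρ (σ.subtypePerm h) *
      permTrace ρ (σ.subtypePerm (p := fun x => ¬ p x) fun x => not_congr (h x)) := by
  unfold permTrace
  rw [Fintype.sum_mul_sum, ← Fintype.sum_prod_type']
  refine Fintype.sum_equiv (Equiv.piEquivPiSubtypeProd p _) _ _ fun y => ?_
  rw [← Fintype.prod_subtype_mul_prod_subtype p]
  rfl

/-- Entries of `ρ ^ (n + 1)` as sums over paths `a, z 0, …, z (n - 1), b`. -/
theorem pow_succ_apply_eq_sum_path {d : ℕ} (ρ : Matrix (Fin d) (Fin d) ℂ) (n : ℕ)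
    (a b : Fin d) :
    (ρ ^ (n + 1)) a b = ∑ z : Fin n → Fin d, ∏ i : Fin (n + 1),
      ρ (Fin.cons (α := fun _ => Fin d) a z i) (Fin.snoc (α := fun _ => Fin d) z b i) := by
  induction n generalizing a with
  | zero => simp [Fin.snoc]
  | succ n ih =>
    rw [pow_succ', Matrix.mul_apply]
    rw [← (Fin.consEquiv (fun _ : Fin (n + 1) => Fin d)).sum_comp, Fintype.sum_prod_type]
    refine Finset.sum_congr rfl fun c _ => ?_
    rw [ih, Finset.mul_sum]
    refine Finset.sum_congr rfl fun z _ => ?_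
    rw [Fin.prod_univ_succ (n := n + 1)]
    have hsnoc := Fin.cons_snoc_eq_snoc_cons c z b
    change _ = ρ _ ((Fin.snoc (α := fun _ => Fin d) (Fin.cons (α := fun _ => Fin d) c z) b :
      Fin (n + 2) → Fin d) 0) * ∏ i : Fin (n + 1),
      ρ _ ((Fin.snoc (α := fun _ => Fin d) (Fin.cons (α := fun _ => Fin d) c z) b :
        Fin (n + 2) → Fin d) i.succ)
    rw [← hsnoc]
    rfl

theorem permTrace_finRotate {d : ℕ} (ρ : Matrix (Fin d) (Fin d) ℂ) (n : ℕ) :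
    permTrace ρ (finRotate (n + 1)) = (ρ ^ (n + 1)).trace := by
  unfold permTrace
  rw [← (Fin.consEquiv (fun _ : Fin (n + 1) => Fin d)).sum_comp, Fintype.sum_prod_type]
  refine Finset.sum_congr rfl fun a _ => ?_
  rw [Matrix.diag_apply, pow_succ_apply_eq_sum_path]
  simp [Fin.snoc_eq_cons_rotate]

/-- A cycle with full support is isomorphic, as a set with a permutation, to a rotation. -/
theorem permTrace_of_cycleType {d : ℕ} (ρ : Matrix (Fin d) (Fin d) ℂ) {α : Type}
    [Fintype α] [DecidableEq α] (σ : Equiv.Perm α) (h : σ.cycleType = {Fintype.card α}) :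
    permTrace ρ σ = (ρ ^ Fintype.card α).trace := by
  have h2 : 2 ≤ Fintype.card α := Equiv.Perm.two_le_of_mem_cycleType (σ := σ) (by simp [h])
  obtain ⟨n, hn⟩ : ∃ n, Fintype.card α = n + 1 := ⟨_, (Nat.sub_add_cancel (by omega)).symm⟩
  have e : α ≃ Fin (n + 1) := Fintype.equivFinOfCardEq hn
  let f : α ≃ {x : Fin (n + 1) // True} := e.trans (Equiv.subtypeUnivEquiv fun _ => trivial).symm
  have hc : IsConj (σ.extendDomain f) (finRotate (n + 1)) := by
    rw [Equiv.Perm.isConj_iff_cycleType_eq, Equiv.Perm.cycleType_extendDomain, h, hn,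
      cycleType_finRotate_of_le (by omega)]
  obtain ⟨c, hc⟩ := isConj_iff.1 hc
  rw [hn, ← permTrace_finRotate, ← hc,
    ← permTrace_congr ρ c (σ.extendDomain f) (c * σ.extendDomain f * c⁻¹) (by simp)]
  refine permTrace_congr ρ e _ _ fun a => ?_
  exact (Equiv.Perm.extendDomain_apply_image σ f a).symm

/-- The value of `permTrace` in terms of the cycle type, which in Mathlib leaves out the fixed
points; they account for the power of `tr ρ`. -/
theorem permTrace_eq {d : ℕ} (ρ : Matrix (Fin d) (Fin d) ℂ) {α : Type}
    [Fintype α] [DecidableEq α] (σ : Equiv.Perm α) :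
    permTrace ρ σ = ρ.trace ^ (Fintype.card α - σ.cycleType.sum) *
      (σ.cycleType.map fun n => (ρ ^ n).trace).prod := by
  -- Split off one nontrivial cycle `c` of `σ` and recurse on the complement of its support.
  induction hN : Fintype.card α using Nat.strong_induction_on generalizing α with
  | _ N ih =>
  subst hN
  by_cases h1 : σ = 1
  · subst h1
    simp [permTrace_one]
  obtain ⟨c, hc⟩ : σ.cycleFactorsFinset.Nonempty := by
    rwa [Finset.nonempty_iff_ne_empty, Ne, Equiv.Perm.cycleFactorsFinset_eq_empty_iff]
  have hcyc := (Equiv.Perm.mem_cycleFactorsFinset_iff.1 hc).1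
  have hagree := (Equiv.Perm.mem_cycleFactorsFinset_iff.1 hc).2
  have hdisj := Equiv.Perm.disjoint_mul_inv_of_mem_cycleFactorsFinset hc
  -- An opaque `p`, so that both subtypes carry the generic `Fintype` and `DecidableEq` instances
  -- rather than those of a coerced finset.
  obtain ⟨p, hp⟩ : ∃ p : α → Prop, ∀ x, p x ↔ x ∈ c.support := ⟨_, fun _ => Iff.rfl⟩
  have hst : ∀ x, p (σ x) ↔ p x := fun x => by
    rw [hp, hp, Equiv.Perm.mem_cycleFactorsFinset_support hc]
  classical
  have hcard : Fintype.card {x // p x} = c.support.card :=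
    Fintype.card_of_subtype _ fun x => (hp x).symm
  have hcard' : Fintype.card {x // ¬ p x} = Fintype.card α - c.support.card := by
    rw [Fintype.card_subtype_compl, hcard]
  set τ := σ.subtypePerm (p := fun x => ¬ p x) fun x => not_congr (hst x)
  have hin : (σ.subtypePerm hst).cycleType = {Fintype.card {x // p x}} := by
    rw [← Equiv.Perm.cycleType_ofSubtype, hcard, ← hcyc.cycleType]
    congr 1
    ext x
    by_cases hx : p x
    · rw [Equiv.Perm.ofSubtype_apply_of_mem _ hx]
      simp [hagree x ((hp x).1 hx)]
    · rw [Equiv.Perm.ofSubtype_apply_of_not_mem _ hx]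
      exact (Equiv.Perm.notMem_support.1 (mt (hp x).2 hx)).symm
  have hout : τ.cycleType = (σ * c⁻¹).cycleType := by
    rw [← Equiv.Perm.cycleType_ofSubtype]
    congr 1
    ext x
    by_cases hx : p x
    · rw [Equiv.Perm.ofSubtype_apply_of_not_mem τ (not_not.2 hx)]
      rcases hdisj x with h | h
      · exact h.symm
      · exact absurd h (Equiv.Perm.mem_support.1 ((hp x).1 hx))
    · rw [Equiv.Perm.ofSubtype_apply_of_mem τ hx]
      have : c⁻¹ x = x := by
        rw [Equiv.Perm.inv_eq_iff_eq]
        exact (Equiv.Perm.notMem_support.1 (mt (hp x).2 hx)).symm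
      rw [Equiv.Perm.mul_apply, this]
      rfl
  have hct : σ.cycleType = τ.cycleType + {c.support.card} := by
    rw [hout, ← hcyc.cycleType, ← hdisj.cycleType_mul, inv_mul_cancel_right]
  have hpos : 2 ≤ c.support.card := hcyc.two_le_card_support
  have hle : c.support.card ≤ Fintype.card α := Finset.card_le_univ _
  rw [permTrace_subtype ρ σ p hst, permTrace_of_cycleType ρ _ hin,
    ih _ (by omega) τ rfl, hct, hcard, hcard']
  have : Fintype.card α - c.support.card - τ.cycleType.sum =
      Fintype.card α - (τ.cycleType + {c.support.card}).sum := by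
    simp only [Multiset.sum_add, Multiset.sum_singleton]
    omega
  rw [this]
  simp only [Multiset.map_add, Multiset.prod_add, Multiset.map_singleton, Multiset.prod_singleton]
  ring

/-! ### Partitions as tuples of multiplicities, and cycle types -/

/-- The multiset `1^{a_1} 2^{a_2} ⋯ k^{a_k}`, with the indices of `a` shifted by one. -/
def partsOfTuple {k : ℕ} (a : Fin k → ℕ) : Multiset ℕ :=
  ∑ j : Fin k, Multiset.replicate (a j) ((j : ℕ) + 1)

/-- The cycle lengths of a permutation, fixed points included. -/
def cycleParts {k : ℕ} (σ : Equiv.Perm (Fin k)) : Multiset ℕ :=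
  σ.cycleType + Multiset.replicate (k - σ.cycleType.sum) 1

theorem mem_partsOfTuple {k : ℕ} {a : Fin k → ℕ} {n : ℕ} (h : n ∈ partsOfTuple a) :
    1 ≤ n ∧ n ≤ k := by
  obtain ⟨j, -, hj⟩ := Multiset.mem_sum.1 h
  have := Multiset.eq_of_mem_replicate hj
  omega

theorem count_partsOfTuple {k : ℕ} (a : Fin k → ℕ) (j : Fin k) :
    (partsOfTuple a).count ((j : ℕ) + 1) = a j := by
  simp [partsOfTuple, Multiset.count_sum', Multiset.count_replicate, Fin.val_inj]

theorem partsOfTuple_count {k : ℕ} (s : Multiset ℕ) (h : ∀ n ∈ s, 1 ≤ n ∧ n ≤ k) :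
    partsOfTuple (fun j : Fin k => s.count ((j : ℕ) + 1)) = s := by
  ext n
  by_cases hn : 1 ≤ n ∧ n ≤ k
  · have := count_partsOfTuple (fun j : Fin k => s.count ((j : ℕ) + 1)) ⟨n - 1, by omega⟩
    simpa [Nat.sub_add_cancel hn.1] using this
  · rw [Multiset.count_eq_zero_of_notMem fun h' => hn (h n h'),
      Multiset.count_eq_zero_of_notMem fun h' => hn (mem_partsOfTuple h')]

theorem sum_partsOfTuple {k : ℕ} (a : Fin k → ℕ) :
    (partsOfTuple a).sum = ∑ j : Fin k, ((j : ℕ) + 1) * a j := by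
  simp [partsOfTuple, Multiset.sum_sum, mul_comm]

theorem prod_map_partsOfTuple {M : Type*} [CommMonoid M] {k : ℕ} (a : Fin k → ℕ) (f : ℕ → M) :
    ((partsOfTuple a).map f).prod = ∏ j : Fin k, f ((j : ℕ) + 1) ^ a j := by
  have h := map_sum (Multiset.mapAddMonoidHom f)
    (fun j : Fin k => Multiset.replicate (a j) ((j : ℕ) + 1)) Finset.univ
  simp only [Multiset.coe_mapAddMonoidHom] at h
  simp [partsOfTuple, h, Multiset.prod_sum]

theorem prod_toFinset_partsOfTuple {k : ℕ} (a : Fin k → ℕ) :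
    ∏ n ∈ (partsOfTuple a).toFinset, ((partsOfTuple a).count n).factorial
      = ∏ j : Fin k, (a j).factorial := by
  have hsub : (partsOfTuple a).toFinset ⊆
      (Finset.univ : Finset (Fin k)).image fun j : Fin k => (j : ℕ) + 1 := by
    intro n hn
    have := mem_partsOfTuple (Multiset.mem_toFinset.1 hn)
    exact Finset.mem_image.2 ⟨⟨n - 1, by omega⟩, Finset.mem_univ _, by simp; omega⟩
  rw [Finset.prod_subset hsub fun n _ hn => by
      rw [Multiset.count_eq_zero_of_notMem (by simpa using hn), Nat.factorial_zero],
    Finset.prod_image fun i _ j _ h => Fin.ext (by simpa using h)]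
  simp only [count_partsOfTuple]

theorem mem_partitionTuples {k : ℕ} (a : Fin k → ℕ) :
    a ∈ partitionTuples k ↔ (partsOfTuple a).sum = k := by
  rw [sum_partsOfTuple, partitionTuples, Finset.mem_filter, and_iff_right_iff_imp]
  intro h
  rw [Fintype.mem_piFinset]
  intro j
  have h1 : ((j : ℕ) + 1) * a j ≤ k :=
    (Finset.single_le_sum (f := fun j : Fin k => ((j : ℕ) + 1) * a j)
      (fun _ _ => Nat.zero_le _) (Finset.mem_univ j)).trans h.le
  rw [Finset.mem_range]
  nlinarith

theorem sum_cycleParts {k : ℕ} (σ : Equiv.Perm (Fin k)) : (cycleParts σ).sum = k := by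
  have := σ.sum_cycleType_le
  simp only [Fintype.card_fin] at this
  simp [cycleParts]
  omega

theorem mem_cycleParts {k : ℕ} (σ : Equiv.Perm (Fin k)) :
    ∀ n ∈ cycleParts σ, 1 ≤ n ∧ n ≤ k := by
  intro n hn
  refine ⟨?_, (Multiset.le_sum_of_mem hn).trans (sum_cycleParts σ).le⟩
  rcases Multiset.mem_add.1 hn with h | h
  · exact Equiv.Perm.one_lt_of_mem_cycleType h |>.le
  · exact (Multiset.eq_of_mem_replicate h).ge

theorem filter_cycleParts {k : ℕ} (σ : Equiv.Perm (Fin k)) :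
    (cycleParts σ).filter (2 ≤ ·) = σ.cycleType := by
  rw [cycleParts, Multiset.filter_add,
    Multiset.filter_eq_self.2 fun _ => Equiv.Perm.two_le_of_mem_cycleType,
    Multiset.filter_eq_nil.2, add_zero]
  intro n hn
  rw [Multiset.eq_of_mem_replicate hn]
  omega

/-- A multiset of positive integers with sum `k` is its parts `≥ 2`, padded with ones. -/
theorem filter_add_replicate {k : ℕ} (s : Multiset ℕ) (hs : ∀ n ∈ s, 1 ≤ n) (hk : s.sum = k) :
    s.filter (2 ≤ ·) + Multiset.replicate (k - (s.filter (2 ≤ ·)).sum) 1 = s := by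
  have h1 : s.filter (fun n => ¬ 2 ≤ n) =
      Multiset.replicate (Multiset.card (s.filter fun n => ¬ 2 ≤ n)) 1 := by
    refine Multiset.eq_replicate_card.2 fun n hn => ?_
    have := hs n (Multiset.mem_of_mem_filter hn)
    have := Multiset.of_mem_filter hn
    omega
  have h2 := Multiset.filter_add_not (2 ≤ ·) s
  have h3 : (s.filter (2 ≤ ·)).sum + Multiset.card (s.filter fun n => ¬ 2 ≤ n) = k := by
    rw [← hk]
    conv_rhs => rw [← h2, Multiset.sum_add, h1]
    simp
  conv_rhs => rw [← h2, h1]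
  congr 2
  omega

theorem cycleParts_eq_iff {k : ℕ} (σ : Equiv.Perm (Fin k)) (s : Multiset ℕ)
    (hs : ∀ n ∈ s, 1 ≤ n) (hk : s.sum = k) :
    cycleParts σ = s ↔ σ.cycleType = s.filter (2 ≤ ·) := by
  constructor
  · rintro rfl
    exact (filter_cycleParts σ).symm
  · intro h
    rw [cycleParts, h, filter_add_replicate s hs hk]

/-- Cauchy's formula for the size of a conjugacy class, in terms of all cycle lengths. -/
theorem card_cycleParts_mul {k : ℕ} (s : Multiset ℕ) (hs : ∀ n ∈ s, 1 ≤ n) (hk : s.sum = k) :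
    (Finset.univ.filter fun σ : Equiv.Perm (Fin k) => cycleParts σ = s).card *
      (s.prod * ∏ n ∈ s.toFinset, (s.count n).factorial) = k.factorial := by
  have hf := filter_add_replicate s hs hk
  set m := s.filter (2 ≤ ·) with hm
  have hle : m.sum ≤ k := by
    rw [← hk, ← Multiset.filter_add_not (2 ≤ ·) s, Multiset.sum_add]
    exact Nat.le_add_right _ _
  have key := Equiv.Perm.card_of_cycleType_mul_eq (Fin k) m
  rw [if_pos ⟨by simpa using hle, fun n hn => Multiset.of_mem_filter hn⟩, Fintype.card_fin] at key
  simp only [cycleParts_eq_iff _ s hs hk]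
  rw [← key]
  congr 1
  have hprod : s.prod = m.prod := by
    conv_lhs => rw [← hf]
    simp
  have h1m : 1 ∉ m := fun h => absurd (Multiset.of_mem_filter h) (by norm_num)
  have hone : s.count 1 = k - m.sum := by
    conv_lhs => rw [← hf]
    simp [h1m]
  have hcount : ∀ n ∈ m.toFinset, (m.count n).factorial = (s.count n).factorial := by
    intro n hn
    rw [hm, Multiset.count_filter_of_pos (Multiset.of_mem_filter (Multiset.mem_toFinset.1 hn))]
  have hins : ∏ n ∈ s.toFinset, (s.count n).factorial =
      ∏ n ∈ insert 1 m.toFinset, (s.count n).factorial := by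
    refine Finset.prod_subset (fun n hn => ?_) fun n _ hn => ?_
    · rw [Multiset.mem_toFinset, ← hf, Multiset.mem_add] at hn
      rcases hn with h | h
      · exact Finset.mem_insert_of_mem (Multiset.mem_toFinset.2 h)
      · exact Finset.mem_insert.2 (Or.inl (Multiset.eq_of_mem_replicate h))
    · rw [Multiset.count_eq_zero_of_notMem (by simpa using hn), Nat.factorial_zero]
  rw [hins, Finset.prod_insert (by simpa using h1m), hone, hprod, Finset.prod_congr rfl hcount]
  ring

/-! ### The cycle index formula -/

theorem acceptance_prob_symmetric_group (d k : ℕ) (hd : 1 ≤ d) (hk : 1 ≤ k)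
    (ρ : Matrix (Fin d) (Fin d) ℂ) :
    (1 / (Nat.factorial k : ℂ)) *
        ∑ π : Equiv.Perm (Fin k), (permOp d π * tensorPow ρ (Fin k)).trace
      = ∑ a ∈ partitionTuples k, ∏ j : Fin k,
          ((ρ ^ ((j : ℕ) + 1)).trace) ^ a j /
            ((((j : ℕ) + 1) ^ a j * Nat.factorial (a j) : ℕ) : ℂ) := by
  have htrace : ∀ π : Equiv.Perm (Fin k), (permOp d π * tensorPow ρ (Fin k)).trace =
      ((cycleParts π).map fun n => (ρ ^ n).trace).prod := by
    intro π
    rw [trace_permOp_mul_tensorPow_s2, permTrace_eq]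
    simp [cycleParts, mul_comm]
  have hmaps : ∀ π ∈ (Finset.univ : Finset (Equiv.Perm (Fin k))),
      (fun j : Fin k => (cycleParts π).count ((j : ℕ) + 1)) ∈ partitionTuples k := by
    intro π _
    rw [mem_partitionTuples, partsOfTuple_count _ (mem_cycleParts π), sum_cycleParts]
  rw [← Finset.sum_fiberwise_of_maps_to hmaps, Finset.mul_sum]
  refine Finset.sum_congr rfl fun a ha => ?_
  rw [mem_partitionTuples] at ha
  have hfib : ∀ π : Equiv.Perm (Fin k),
      ((fun j : Fin k => (cycleParts π).count ((j : ℕ) + 1)) = a) ↔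
        cycleParts π = partsOfTuple a := by
    intro π
    constructor
    · rintro rfl
      exact (partsOfTuple_count _ (mem_cycleParts π)).symm
    · intro h
      funext j
      rw [h, count_partsOfTuple]
  simp only [hfib]
  rw [Finset.sum_congr rfl fun π hπ => by
    rw [htrace, (Finset.mem_filter.1 hπ).2, prod_map_partsOfTuple], Finset.sum_const,
    nsmul_eq_mul, Finset.prod_div_distrib]
  have hcard := card_cycleParts_mul (partsOfTuple a) (fun n hn => (mem_partsOfTuple hn).1) ha
  have hprod := prod_map_partsOfTuple a (fun n => n)
  rw [Multiset.map_id'] at hprod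
  rw [prod_toFinset_partsOfTuple, hprod, ← Finset.prod_mul_distrib] at hcard
  rw [← Nat.cast_prod, ← hcard]
  set D := ∏ j : Fin k, (((j : ℕ) + 1) ^ a j * (a j).factorial)
  have h0 := hcard ▸ Nat.factorial_ne_zero k
  have hD : (D : ℂ) ≠ 0 := Nat.cast_ne_zero.2 (right_ne_zero_of_mul h0)
  have hC := Nat.cast_ne_zero (R := ℂ).2 (left_ne_zero_of_mul h0)
  push_cast
  field_simp
end

section
/- Let r ≥ 1, let λ : Fin r → ℝ, and let k ≥ 1. Then (1/k!) ∑_{π ∈ S_k} ∏_{j=1}^{k} (∑_{i} λ_i^j)^{c_j(π)} = ∑_{d : Fin r → ℕ, d_1 + ⋯ + d_r = k} ∏_{i} λ_i^{d_i}; that is, the cycle index polynomial of the symmetric group S_k evaluated at the power sums p_j = ∑_i λ_i^j equals the k-th complete homogeneous symmetric polynomial of λ_1,…,λ_r. -/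
open Finset Equiv

/-- The content of a colouring `f`: how many points receive each colour. -/
def content {α ι : Type*} [Fintype α] [DecidableEq ι] (f : α → ι) (i : ι) : ℕ :=
  #{x | f x = i}

theorem sum_content {α ι : Type*} [Fintype α] [Fintype ι] [DecidableEq ι] (f : α → ι) :
    ∑ i, content f i = Fintype.card α :=
  (card_eq_sum_card_fiberwise (s := univ) (f := f) (t := univ) fun _ _ => mem_univ _).symm

theorem prod_comp_eq_prod_pow_content {α ι : Type*} [Fintype α] [Fintype ι] [DecidableEq ι]
    (lam : ι → ℝ) (f : α → ι) : ∏ x, lam (f x) = ∏ i, lam i ^ content f i := by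
  rw [← prod_fiberwise' univ f lam]
  simp [content]

theorem exists_content_eq {α ι : Type*} [Fintype α] [Fintype ι] [DecidableEq ι] (d : ι → ℕ)
    (hd : ∑ i, d i = Fintype.card α) : ∃ f : α → ι, content f = d := by
  have hcard : Fintype.card α = Fintype.card (Σ i, Fin (d i)) := by simp [hd]
  let e := Fintype.equivOfCardEq hcard
  refine ⟨fun x => (e x).1, funext fun i => ?_⟩
  rw [content, ← Fintype.card_subtype,
    Fintype.card_congr ((e.subtypeEquiv (q := fun y => y.1 = i) fun _ => Iff.rfl).trans
      (Equiv.sigmaSubtype i)), Fintype.card_fin]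

/-- Permutations act transitively on the colourings of a given content. -/
theorem exists_perm_of_content_eq {α ι : Type*} [Fintype α] [DecidableEq ι] {f g : α → ι}
    (h : content f = content g) : ∃ σ : Perm α, g ∘ σ = f := by
  have e (i : ι) : {x // f x = i} ≃ {x // g x = i} := by
    refine Fintype.equivOfCardEq ?_
    rw [Fintype.card_subtype, Fintype.card_subtype]
    exact congrFun h i
  refine ⟨(sigmaFiberEquiv f).symm.trans ((sigmaCongrRight e).trans (sigmaFiberEquiv g)), ?_⟩
  ext x
  exact (e (f x) ⟨x, rfl⟩).2

theorem content_comp_perm {α ι : Type*} [Fintype α] [DecidableEq ι] (f : α → ι) (σ : Perm α) :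
    content (f ∘ σ) = content f := by
  ext i
  exact card_equiv σ (by simp)

/-- Orbit-stabilizer for the colourings of content `d`. Fixing one of them, `g`, the permutations
are partitioned by the value of `g ∘ σ`, and the class of `f` is a coset of the stabilizer
of `f`. -/
theorem sum_card_stabilizer {α ι : Type*} [Fintype α] [DecidableEq α] [Fintype ι] [DecidableEq ι]
    (d : ι → ℕ) (hd : ∑ i, d i = Fintype.card α) :
    ∑ f : α → ι with content f = d, #{π : Perm α | f ∘ π = f} = (Fintype.card α).factorial := by
  obtain ⟨g, hg⟩ := exists_content_eq d hd
  rw [← Fintype.card_perm, ← card_univ, card_eq_sum_card_fiberwise (f := fun σ : Perm α => g ∘ σ)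
    (t := {f : α → ι | content f = d}) (fun σ _ => by simp [content_comp_perm, hg])]
  refine sum_congr rfl fun f hf => ?_
  obtain ⟨τ, rfl⟩ := exists_perm_of_content_eq ((mem_filter.1 hf).2.trans hg.symm)
  refine card_equiv (Equiv.mulLeft τ) fun π => ?_
  simp [Function.comp_assoc]

/-- The `π`-invariant colourings are the functions on the set of cycles of `π`. -/
def invariantEquiv {α ι : Type*} (π : Perm α) :
    {f : α → ι // f ∘ π = f} ≃ (Quotient (Perm.SameCycle.setoid π) → ι) where
  toFun f := Quotient.lift f.1 (by
    rintro x _ ⟨n, rfl⟩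
    have hstep (y : α) : f.1 (π y) = f.1 y := congrFun f.2 y
    induction n using Int.induction_on with
    | zero => rfl
    | succ n ih => rw [add_comm, zpow_add, zpow_one, Perm.mul_apply, hstep, ih]
    | pred n ih =>
      rw [ih, ← hstep ((π ^ (-(n : ℤ) - 1)) x), ← Perm.mul_apply, ← zpow_one_add,
        add_sub_cancel])
  invFun g := ⟨fun x => g (Quotient.mk _ x), funext fun x => congrArg g
    (Quotient.sound (Perm.sameCycle_apply_left.2 (Perm.SameCycle.refl π x)))⟩
  left_inv _ := rfl
  right_inv g := funext fun q => Quotient.inductionOn q fun _ => rfl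

/-- The cycle index monomial of `π`, evaluated at power sums, is the total weight of the
`π`-invariant colourings. -/
theorem prod_powerSum_eq_sum_invariant {α ι : Type*} [Fintype α] [DecidableEq α] [Fintype ι]
    [DecidableEq ι] (lam : ι → ℝ) (π : Perm α) :
    ∏ j ∈ Icc 1 (Fintype.card α), (∑ i, lam i ^ j) ^ cycleCount π j
      = ∑ f : α → ι with f ∘ π = f, ∏ x, lam (f x) := by
  classical
  let Q := Quotient (Perm.SameCycle.setoid π)
  let mk : α → Q := Quotient.mk _
  let len : Q → ℕ := fun q => #{x | mk x = q}
  have hlen (x : α) : #{y | π.SameCycle x y} = len (mk x) := by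
    refine congrArg card (filter_congr fun y _ => ?_)
    exact Perm.sameCycle_comm.trans (Quotient.eq (r := Perm.SameCycle.setoid π)).symm
  have hlen_mem (q : Q) : len q ∈ Icc 1 (Fintype.card α) := by
    refine mem_Icc.2 ⟨?_, card_le_univ _⟩
    obtain ⟨x, rfl⟩ := Quotient.exists_rep q
    exact card_pos.2 ⟨x, by simp [mk]⟩
  -- The points on cycles of length `j` are `j` times as many as those cycles, so the division in
  -- `cycleCount` is exact.
  have hcount (j : ℕ) (hj : 1 ≤ j) : cycleCount π j = #{q : Q | len q = j} := by
    have : #{x : α | #{y | π.SameCycle x y} = j} = #{q : Q | len q = j} * j := by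
      simp only [hlen]
      rw [card_eq_sum_card_fiberwise (f := mk) (t := {q : Q | len q = j})
        (fun x hx => by simpa using hx), ← smul_eq_mul, ← sum_const]
      refine sum_congr rfl fun q hq => ?_
      rw [filter_filter]
      have hq' : len q = j := by simpa using hq
      rw [← hq']
      refine congrArg card (filter_congr fun x _ => ?_)
      constructor
      · exact fun h => h.2
      · exact fun h => ⟨by rw [h], h⟩
    rw [cycleCount, this, Nat.mul_div_cancel _ hj]
  calc ∏ j ∈ Icc 1 (Fintype.card α), (∑ i, lam i ^ j) ^ cycleCount π j
      = ∏ q : Q, ∑ i, lam i ^ len q := by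
        rw [← prod_fiberwise_of_maps_to' (s := univ) (fun q _ => hlen_mem q)
          (fun j => ∑ i, lam i ^ j)]
        refine prod_congr rfl fun j hj => ?_
        rw [prod_const, hcount j (mem_Icc.1 hj).1]
    _ = ∑ g : Q → ι, ∏ q, lam (g q) ^ len q := by
        rw [prod_univ_sum, Fintype.piFinset_univ]
    _ = ∑ g : Q → ι, ∏ x, lam (g (mk x)) := by
        refine sum_congr rfl fun g _ => ?_
        rw [← prod_fiberwise' univ mk (fun q => lam (g q))]
        simp only [prod_const, len]
    _ = ∑ f : {f : α → ι // f ∘ π = f}, ∏ x, lam (f.1 x) :=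
        (Fintype.sum_equiv (invariantEquiv π) _ _ fun _ => rfl).symm
    _ = ∑ f : α → ι with f ∘ π = f, ∏ x, lam (f x) :=
        (sum_subtype _ (by simp) fun f : α → ι => ∏ x, lam (f x)).symm

theorem cycle_index_symmetric_eq_complete_homogeneous (r : ℕ) (hr : 1 ≤ r)
    (lam : Fin r → ℝ) (k : ℕ) (hk : 1 ≤ k) :
    (1 / (Nat.factorial k : ℝ)) *
        ∑ π : Equiv.Perm (Fin k), ∏ j ∈ Finset.Icc 1 k,
          (∑ i, lam i ^ j) ^ cycleCount π j
      = ∑ dd ∈ Finset.Nat.antidiagonalTuple r k, ∏ i, lam i ^ dd i := by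
  have hk0 : (k.factorial : ℝ) ≠ 0 := by exact_mod_cast k.factorial_ne_zero
  rw [one_div, inv_mul_eq_iff_eq_mul₀ hk0]
  calc ∑ π : Perm (Fin k), ∏ j ∈ Icc 1 k, (∑ i, lam i ^ j) ^ cycleCount π j
      = ∑ π : Perm (Fin k), ∑ f : Fin k → Fin r with f ∘ π = f, ∏ x, lam (f x) := by
        refine sum_congr rfl fun π _ => ?_
        rw [← prod_powerSum_eq_sum_invariant, Fintype.card_fin]
    _ = ∑ f : Fin k → Fin r, #{π : Perm (Fin k) | f ∘ π = f} * ∏ x, lam (f x) := by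
        simp only [sum_filter]
        rw [sum_comm]
        refine sum_congr rfl fun f _ => ?_
        rw [← sum_filter, sum_const, nsmul_eq_mul]
    _ = ∑ d ∈ Finset.Nat.antidiagonalTuple r k, ∑ f : Fin k → Fin r with content f = d,
          #{π : Perm (Fin k) | f ∘ π = f} * ∏ x, lam (f x) :=
        (sum_fiberwise_of_maps_to (fun f _ => by
          simp [Finset.Nat.mem_antidiagonalTuple, sum_content]) _).symm
    _ = k.factorial * ∑ d ∈ Finset.Nat.antidiagonalTuple r k, ∏ i, lam i ^ d i := by
        rw [mul_sum]
        refine sum_congr rfl fun d hd => ?_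
        have hd' : ∑ i, d i = Fintype.card (Fin k) := by
          simpa [Finset.Nat.mem_antidiagonalTuple] using hd
        have hsum := sum_card_stabilizer d hd'
        rw [Fintype.card_fin] at hsum
        rw [← hsum, Nat.cast_sum, sum_mul]
        refine sum_congr rfl fun f hf => ?_
        rw [prod_comp_eq_prod_pow_content, (mem_filter.1 hf).2]
end

section
/- Let x : ℕ → ℝ and for each n ≥ 0 define Z_n = (1/n!) ∑_{π ∈ S_n} ∏_{j=1}^{n} x_j^{c_j(π)} (with Z_0 = 1). Then for every k ≥ 1 the recurrence k · Z_k = ∑_{j=1}^{k} x_j · Z_{k-j} holds. -/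
open Equiv Finset

/-- The contribution `∏ x i ^ mᵢ / (i ^ mᵢ * mᵢ!)` to the cycle index of the permutations whose
cycle lengths, fixed points included, form the multiset `m`; here `mᵢ` is the multiplicity of `i`. -/
noncomputable def partitionWeight (x : ℕ → ℝ) (m : Multiset ℕ) : ℝ :=
  ∏ i ∈ m.toFinset, x i ^ m.count i / ((i : ℝ) ^ m.count i * ((m.count i).factorial : ℝ))

theorem partitionWeight_eq_prod (x : ℕ → ℝ) {m : Multiset ℕ} {s : Finset ℕ}
    (hs : m.toFinset ⊆ s) :
    partitionWeight x m =
      ∏ i ∈ s, x i ^ m.count i / ((i : ℝ) ^ m.count i * ((m.count i).factorial : ℝ)) := by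
  refine Finset.prod_subset hs fun i _ hi => ?_
  have : m.count i = 0 := by simpa [Multiset.count_eq_zero] using hi
  simp [this]

theorem partitionWeight_cons (x : ℕ → ℝ) {j : ℕ} (hj : j ≠ 0) (m : Multiset ℕ) :
    (j : ℝ) * ((j ::ₘ m).count j : ℝ) * partitionWeight x (j ::ₘ m) =
      x j * partitionWeight x m := by
  have hmem : j ∈ insert j m.toFinset := by simp
  rw [partitionWeight_eq_prod x (m := j ::ₘ m) (s := insert j m.toFinset) (by simp),
    partitionWeight_eq_prod x (Finset.subset_insert j m.toFinset),
    ← Finset.mul_prod_erase _ _ hmem, ← Finset.mul_prod_erase _ _ hmem]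
  have hrest : ∀ i ∈ (insert j m.toFinset).erase j, (j ::ₘ m).count i = m.count i := fun i hi =>
    Multiset.count_cons_of_ne (Finset.ne_of_mem_erase hi) m
  rw [Finset.prod_congr rfl fun i hi => by rw [hrest i hi]]
  rw [Multiset.count_cons_self, Nat.factorial_succ, ← mul_assoc, ← mul_assoc]
  congr 1
  have : (j : ℝ) ≠ 0 := by exact_mod_cast hj
  push_cast
  field_simp
  ring

/-- Partitions of `k` with `j` among their parts correspond to partitions of `k - j`, by removing
one copy of `j`. -/
theorem sum_partition_cons (k j : ℕ) (hj : 1 ≤ j) (hjk : j ≤ k) (f : Multiset ℕ → ℝ) :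
    ∑ p : k.Partition with j ∈ p.parts, f p.parts =
      ∑ q : (k - j).Partition, f (j ::ₘ q.parts) := by
  refine Finset.sum_bij' (fun p hp => ⟨p.parts.erase j, fun h => p.parts_pos
      (Multiset.mem_of_mem_erase h), ?_⟩) (fun q _ => ⟨j ::ₘ q.parts, ?_, ?_⟩) ?_ ?_ ?_ ?_ ?_
  · have h1 := Multiset.sum_erase (Finset.mem_filter.1 hp).2
    have h2 := p.parts_sum
    omega
  · intro i hi
    rcases Multiset.mem_cons.1 hi with rfl | h
    · exact hj
    · exact q.parts_pos h
  · have h2 := q.parts_sum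
    rw [Multiset.sum_cons]
    omega
  · simp
  · simp
  · intro p hp
    ext1
    exact Multiset.cons_erase (Finset.mem_filter.1 hp).2
  · intro q _
    ext1
    simp
  · intro p hp
    simp only [Multiset.cons_erase (Finset.mem_filter.1 hp).2]

theorem partition_sum_count {k : ℕ} (p : k.Partition) :
    ∑ j ∈ Finset.Icc 1 k, j * p.parts.count j = k := by
  conv_rhs => rw [← p.parts_sum, Finset.sum_multiset_count]
  simp only [smul_eq_mul, mul_comm]
  symm
  refine Finset.sum_subset (fun i hi => ?_) fun i _ hi => ?_
  · rw [Multiset.mem_toFinset] at hi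
    exact Finset.mem_Icc.2 ⟨p.parts_pos hi, p.parts_sum ▸ Multiset.le_sum_of_mem hi⟩
  · have : p.parts.count i = 0 := by simpa [Multiset.count_eq_zero] using hi
    simp [this]

theorem sum_partitionWeight_recurrence (x : ℕ → ℝ) (k : ℕ) :
    (k : ℝ) * ∑ p : k.Partition, partitionWeight x p.parts =
      ∑ j ∈ Finset.Icc 1 k, x j * ∑ q : (k - j).Partition, partitionWeight x q.parts := by
  calc
    _ = ∑ p : k.Partition, ∑ j ∈ Finset.Icc 1 k,
          (j : ℝ) * (p.parts.count j : ℝ) * partitionWeight x p.parts := by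
      rw [Finset.mul_sum]
      refine Finset.sum_congr rfl fun p _ => ?_
      rw [← Finset.sum_mul]
      congr 1
      exact_mod_cast (partition_sum_count p).symm
    _ = ∑ j ∈ Finset.Icc 1 k, ∑ p : k.Partition,
          (j : ℝ) * (p.parts.count j : ℝ) * partitionWeight x p.parts := Finset.sum_comm
    _ = _ := by
      refine Finset.sum_congr rfl fun j hj => ?_
      obtain ⟨hj1, hjk⟩ := Finset.mem_Icc.1 hj
      rw [Finset.mul_sum]
      simp_rw [← partitionWeight_cons x (Nat.one_le_iff_ne_zero.1 hj1)]
      rw [← sum_partition_cons k j hj1 hjk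
        (fun m => (j : ℝ) * (m.count j : ℝ) * partitionWeight x m)]
      symm
      refine Finset.sum_subset (Finset.filter_subset _ _) fun p _ hp => ?_
      have : p.parts.count j = 0 := by simpa [Multiset.count_eq_zero] using hp
      simp [this]

theorem parts_eq_filter_add_replicate {n : ℕ} (p : n.Partition) :
    p.parts = p.parts.filter (2 ≤ ·) + Multiset.replicate (p.parts.count 1) 1 := by
  rw [← Multiset.filter_eq']
  conv_lhs => rw [← Multiset.filter_add_not (fun i => 2 ≤ i) p.parts]
  congr 1
  refine Multiset.filter_congr fun i hi => ?_
  have := p.parts_pos hi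
  omega

/-- The orbit-stabilizer count of permutations with a given cycle type, with fixed points recorded
as parts equal to `1`. -/
theorem card_partition_eq_mul {α : Type*} [Fintype α] [DecidableEq α]
    (p : (Fintype.card α).Partition) :
    #{π : Perm α | π.partition = p} *
      ∏ i ∈ p.parts.toFinset, (i ^ p.parts.count i * (p.parts.count i).factorial) =
      (Fintype.card α).factorial := by
  set m := p.parts.filter (2 ≤ ·) with hm
  have hp : p.parts = m + Multiset.replicate (p.parts.count 1) 1 :=
    parts_eq_filter_add_replicate p
  have hsum : m.sum + p.parts.count 1 = Fintype.card α := by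
    have h := congrArg Multiset.sum hp
    rw [p.parts_sum] at h
    simpa using h.symm
  have hset : ({π : Perm α | π.partition = p} : Finset (Perm α)) =
      ({π : Perm α | π.cycleType = m} : Finset (Perm α)) := by
    ext π
    simp only [mem_filter, mem_univ, true_and]
    constructor
    · rintro rfl
      exact Perm.filter_parts_partition_eq_cycleType.symm
    · intro h
      ext1
      rw [Perm.parts_partition, ← Perm.sum_cycleType, h,
        show Fintype.card α - m.sum = p.parts.count 1 by omega]
      exact hp.symm
  have h1 : 1 ∉ m.toFinset := by simp [hm]
  have hcount : ∀ i ∈ m.toFinset, p.parts.count i = m.count i := by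
    intro i hi
    have hi2 : 2 ≤ i := by
      simp only [hm, Multiset.mem_toFinset, Multiset.mem_filter] at hi
      exact hi.2
    rw [hm, Multiset.count_filter_of_pos hi2]
  have hprod : ∏ i ∈ p.parts.toFinset, (i ^ p.parts.count i * (p.parts.count i).factorial) =
      (p.parts.count 1).factorial * m.prod * ∏ i ∈ m.toFinset, (m.count i).factorial := by
    rw [Finset.prod_subset (s₂ := insert 1 m.toFinset)]
    · rw [Finset.prod_insert h1, Finset.prod_congr rfl fun i hi => by rw [hcount i hi],
        Finset.prod_mul_distrib, ← Finset.prod_multiset_count]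
      simp [mul_assoc]
    · intro i hi
      rw [hp] at hi
      simp only [Multiset.mem_toFinset, Multiset.mem_add, Multiset.mem_replicate] at hi
      simp only [mem_insert, Multiset.mem_toFinset]
      tauto
    · intro i _ hi
      have : p.parts.count i = 0 := by simpa [Multiset.count_eq_zero] using hi
      simp [this]
  have key := Perm.card_of_cycleType_mul_eq α m
  rw [if_pos ⟨by omega, fun a ha => (Multiset.mem_filter.1 ha).2⟩,
    show Fintype.card α - m.sum = p.parts.count 1 by omega] at key
  rw [hset, hprod, key]

/-- The points lying in cycles of length `j` are the disjoint union of the supports of the cycle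
factors of size `j` when `2 ≤ j`, and are the fixed points when `j = 1`; hence the division by `j`
in `cycleCount` is exact. -/
theorem cycleCount_eq_count {α : Type*} [Fintype α] [DecidableEq α] (π : Perm α) {j : ℕ}
    (hj : 1 ≤ j) : cycleCount π j = π.partition.parts.count j := by
  have hmoved : ∀ x, π x ≠ x →
      (Finset.univ.filter fun y : α => π.SameCycle x y) = (π.cycleOf x).support := by
    intro x hx
    ext y
    simp [Perm.mem_support_cycleOf_iff' hx]
  have hfixed : ∀ x, π x = x → (Finset.univ.filter fun y : α => π.SameCycle x y) = {x} := by
    intro x hx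
    ext y
    simp only [mem_filter, mem_univ, true_and, mem_singleton]
    constructor
    · intro h
      exact (h.eq_of_left hx).symm
    · rintro rfl
      exact Perm.SameCycle.refl _ _
  unfold cycleCount
  rw [Perm.parts_partition, Multiset.count_add, Multiset.count_replicate]
  rcases eq_or_lt_of_le hj with rfl | hj2
  · have hct : π.cycleType.count 1 = 0 :=
      Multiset.count_eq_zero.2 fun h => by simpa using Perm.two_le_of_mem_cycleType h
    rw [hct, if_pos rfl, Nat.div_one, zero_add, ← Finset.card_compl]
    congr 1
    ext x
    simp only [mem_filter, mem_univ, true_and, mem_compl, Perm.mem_support, not_not]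
    constructor
    · intro h
      by_contra hx
      rw [hmoved x hx] at h
      have := (Perm.isCycle_cycleOf π hx).two_le_card_support
      omega
    · intro hx
      simp [hfixed x hx]
  · rw [if_neg (by omega), add_zero]
    have hset : (Finset.univ.filter fun x : α =>
        (Finset.univ.filter fun y : α => π.SameCycle x y).card = j) =
        (π.cycleFactorsFinset.filter fun c => #c.support = j).biUnion Perm.support := by
      ext x
      simp only [mem_filter, mem_univ, true_and, mem_biUnion]
      constructor
      · intro h
        have hx : π x ≠ x := fun hx => by
          rw [hfixed x hx] at h
          simp at h
          omega
        rw [hmoved x hx] at h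
        refine ⟨π.cycleOf x, ⟨?_, h⟩, ?_⟩
        · rwa [Perm.cycleOf_mem_cycleFactorsFinset_iff, Perm.mem_support]
        · rw [Perm.mem_support_cycleOf_iff' hx]
      · rintro ⟨c, ⟨hc, hcard⟩, hxc⟩
        have hx : π x ≠ x := Perm.mem_support.1 (Perm.mem_cycleFactorsFinset_support_le hc hxc)
        rw [hmoved x hx, ← Perm.cycle_is_cycleOf hxc hc, hcard]
    rw [hset, Finset.card_biUnion, Finset.sum_congr rfl fun c hc => (mem_filter.1 hc).2,
      Finset.sum_const, smul_eq_mul, Nat.mul_div_cancel _ (by omega), Perm.cycleType_def,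
      Multiset.count_map]
    · rw [Finset.card_def, Finset.filter_val]
      congr 1
      exact Multiset.filter_congr fun _ _ => eq_comm
    · intro c hc d hd hcd
      exact (π.cycleFactorsFinset_pairwise_disjoint (mem_filter.1 hc).1 (mem_filter.1 hd).1
        hcd).disjoint_support

theorem sum_perm_eq_sum_partition (x : ℕ → ℝ) (α : Type*) [Fintype α] [DecidableEq α] :
    (1 / ((Fintype.card α).factorial : ℝ)) *
      ∑ π : Perm α, ∏ j ∈ Finset.Icc 1 (Fintype.card α), x j ^ cycleCount π j =
      ∑ p : (Fintype.card α).Partition, partitionWeight x p.parts := by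
  -- Group the permutations by cycle type; the summand is constant on each class.
  rw [← Finset.sum_fiberwise (s := (univ : Finset (Perm α))) (fun π => π.partition),
    Finset.mul_sum]
  refine Finset.sum_congr rfl fun p _ => ?_
  have hterm : ∀ π ∈ ({π : Perm α | π.partition = p} : Finset (Perm α)),
      ∏ j ∈ Finset.Icc 1 (Fintype.card α), x j ^ cycleCount π j =
        ∏ j ∈ p.parts.toFinset, x j ^ p.parts.count j := by
    intro π hπ
    obtain rfl : π.partition = p := (mem_filter.1 hπ).2
    rw [Finset.prod_congr rfl fun j hj => by rw [cycleCount_eq_count π (mem_Icc.1 hj).1]]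
    symm
    refine Finset.prod_subset (fun i hi => ?_) fun i _ hi => ?_
    · rw [Multiset.mem_toFinset] at hi
      exact mem_Icc.2 ⟨π.partition.parts_pos hi, Nat.Partition.le_of_mem_parts hi⟩
    · rw [Multiset.count_eq_zero.2 fun h => hi (Multiset.mem_toFinset.2 h), pow_zero]
  rw [Finset.sum_congr rfl hterm, Finset.sum_const, nsmul_eq_mul, partitionWeight,
    Finset.prod_div_distrib]
  have hcard := congrArg (Nat.cast : ℕ → ℝ) (card_partition_eq_mul p)
  push_cast at hcard
  have hfac : ((Fintype.card α).factorial : ℝ) ≠ 0 := by positivity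
  rw [← hcard] at hfac ⊢
  have h1 := left_ne_zero_of_mul hfac
  have h2 := right_ne_zero_of_mul hfac
  field_simp

theorem cycle_index_recurrence (x : ℕ → ℝ) (Z : ℕ → ℝ)
    (hZ : ∀ n, Z n = (1 / (Nat.factorial n : ℝ)) *
      ∑ π : Equiv.Perm (Fin n), ∏ j ∈ Finset.Icc 1 n, x j ^ cycleCount π j)
    (k : ℕ) (hk : 1 ≤ k) :
    (k : ℝ) * Z k = ∑ j ∈ Finset.Icc 1 k, x j * Z (k - j) := by
  have hZ' : ∀ n, Z n = ∑ p : n.Partition, partitionWeight x p.parts := by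
    intro n
    have h := sum_perm_eq_sum_partition x (Fin n)
    rw [Fintype.card_fin] at h
    rw [hZ, h]
  simp only [hZ']
  exact sum_partitionWeight_recurrence x k
end

section
/- Let n ≥ 1 and let p : ℕ → ℝ satisfy 1 = p_1 ≥ p_2 ≥ ⋯ ≥ p_{n+1} ≥ 0. Then (1/(n+1)!) ∑_{π ∈ S_{n+1}} ∏_{j=1}^{n+1} p_j^{c_j(π)} ≤ (1/n!) ∑_{π ∈ S_n} ∏_{j=1}^{n} p_j^{c_j(π)}. (Equivalently, in terms of complete Bell polynomials: (1/(n+1)!) B_{n+1}(p_1, p_2, 2! p_3, …, n! p_{n+1}) ≤ (1/n!) B_n(p_1, p_2, 2! p_3, …, (n-1)! p_n).) -/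
open Finset Equiv Equiv.Perm

/-- The length of the cycle of `π` through `x`; it is `1` for a fixed point. -/
def orbSize {α : Type*} [Fintype α] [DecidableEq α] (π : Perm α) (x : α) : ℕ :=
  (univ.filter fun y : α => π.SameCycle x y).card

lemma cycleCount_eq_s6 {α : Type*} [Fintype α] [DecidableEq α] (π : Perm α) (j : ℕ) :
    cycleCount π j = (univ.filter fun x : α => orbSize π x = j).card / j := rfl

lemma orbSize_pos {α : Type*} [Fintype α] [DecidableEq α] (π : Perm α) (x : α) :
    0 < orbSize π x :=
  card_pos.mpr ⟨x, by simp [SameCycle.refl]⟩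

lemma orbSize_le {n : ℕ} (π : Perm (Fin n)) (x : Fin n) : orbSize π x ≤ n :=
  (card_le_univ _).trans (by simp)

lemma orbSize_congr {α : Type*} [Fintype α] [DecidableEq α] {π : Perm α} {x y : α}
    (h : π.SameCycle x y) : orbSize π x = orbSize π y := by
  unfold orbSize
  congr 1
  ext z
  simp only [mem_filter, mem_univ, true_and]
  exact ⟨fun hz => h.symm.trans hz, fun hz => h.trans hz⟩

/-- A map that sends each step of `σ` into a single cycle of `π` sends cycles into cycles. -/
lemma SameCycle.map_of_step {α β : Type*} [Finite α] {σ : Perm α} {π : Perm β} (f : α → β)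
    (h : ∀ a, π.SameCycle (f a) (f (σ a))) {a b : α} (hab : σ.SameCycle a b) :
    π.SameCycle (f a) (f b) := by
  obtain ⟨i, rfl⟩ := hab.exists_nat_pow_eq
  clear hab
  induction i with
  | zero => exact SameCycle.refl _ _
  | succ i ih =>
    rw [pow_succ', Perm.mul_apply]
    exact ih.trans (h _)

/-- After inserting `0` into the cycle of `x`, two points share a cycle if and only if they do so
for `π` once `0` is identified with `x`. -/
lemma sameCycle_insert {n : ℕ} (π : Perm (Fin n)) (x : Fin n) (a b : Fin (n + 1)) :
    (decomposeFin.symm (x.succ, π)).SameCycle a b ↔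
      π.SameCycle (Fin.cases x id a : Fin n) (Fin.cases x id b : Fin n) := by
  set σ := decomposeFin.symm (x.succ, π) with hσ
  have h0 : σ 0 = x.succ := by simp [hσ]
  have hs : ∀ y, σ y.succ = if π y = x then 0 else (π y).succ := by
    intro y
    rw [hσ, decomposeFin_symm_apply_succ]
    split_ifs with h
    · rw [h, swap_apply_right]
    · exact swap_apply_of_ne_of_ne (Fin.succ_ne_zero _) (by simpa using h)
  have h0x : σ.SameCycle 0 x.succ := by
    rw [← h0]
    exact sameCycle_apply_right.mpr (SameCycle.refl _ _)
  have hrep : ∀ c : Fin (n + 1), σ.SameCycle c (Fin.cases x id c : Fin n).succ := by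
    intro c
    refine Fin.cases ?_ (fun y => ?_) c
    · exact h0x
    · exact SameCycle.refl _ _
  constructor
  · refine SameCycle.map_of_step (fun c => (Fin.cases x id c : Fin n)) fun c => ?_
    refine Fin.cases ?_ (fun y => ?_) c
    · simp [h0, SameCycle.refl]
    · rw [hs]
      split_ifs with h
      · simp [← h, SameCycle.refl]
      · simp [SameCycle.refl]
  · intro h
    refine (hrep a).trans (SameCycle.trans ?_ (hrep b).symm)
    refine SameCycle.map_of_step Fin.succ (fun y => ?_) h
    have hy : σ.SameCycle y.succ (σ y.succ) := sameCycle_apply_right.mpr (SameCycle.refl _ _)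
    rw [hs] at hy
    split_ifs at hy with h
    · rw [h]
      exact hy.trans h0x
    · exact hy

lemma orbSize_insert {n : ℕ} (π : Perm (Fin n)) (x : Fin n) (a : Fin (n + 1)) :
    orbSize (decomposeFin.symm (x.succ, π)) a =
      (if π.SameCycle (Fin.cases x id a : Fin n) x then 1 else 0)
        + orbSize π (Fin.cases x id a : Fin n) := by
  unfold orbSize
  simp only [sameCycle_insert, card_filter, Fin.sum_univ_succ, Fin.cases_zero, Fin.cases_succ, id]
  congr!

/-- Inserting `0` into a cycle of length `k` turns one `k`-cycle into a `(k + 1)`-cycle. -/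
lemma cycleCount_insert {n : ℕ} (π : Perm (Fin n)) (x : Fin n) :
    cycleCount π (orbSize π x)
        = cycleCount (decomposeFin.symm (x.succ, π)) (orbSize π x) + 1 ∧
    cycleCount (decomposeFin.symm (x.succ, π)) (orbSize π x + 1)
        = cycleCount π (orbSize π x + 1) + 1 ∧
    ∀ j, j ≠ orbSize π x → j ≠ orbSize π x + 1 →
      cycleCount (decomposeFin.symm (x.succ, π)) j = cycleCount π j := by
  set k := orbSize π x with hk
  have hkpos : 0 < k := orbSize_pos π x
  have hC : (univ.filter fun y => π.SameCycle y x).card = k := by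
    simp only [hk, orbSize, sameCycle_comm (x := x)]
  have hsize : ∀ y, π.SameCycle y x → orbSize π y = k := fun y hy => orbSize_congr hy
  -- `M j` counts the points on `j`-cycles of `π` outside the cycle of `x`.
  obtain ⟨M, hM⟩ : ∃ M : ℕ → ℕ, ∀ j, M j =
    (univ.filter fun y => orbSize π y = j ∧ ¬ π.SameCycle y x).card := ⟨_, fun _ => rfl⟩
  have hπ : ∀ j, (univ.filter fun y => orbSize π y = j).card = M j + if j = k then k else 0 := by
    intro j
    have hsum : (univ.filter fun y => orbSize π y = j).card
        = M j + if j = k then (univ.filter fun y => π.SameCycle y x).card else 0 := by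
      rw [hM]
      simp only [card_filter]
      split_ifs with hj
      · rw [← sum_add_distrib]
        refine sum_congr rfl fun y _ => ?_
        by_cases hy : π.SameCycle y x
        · simp [hy, hsize y hy, hj]
        · simp [hy]
      · rw [add_zero]
        refine sum_congr rfl fun y _ => ?_
        by_cases hy : π.SameCycle y x
        · simp [hy, hsize y hy, Ne.symm hj]
        · simp [hy]
    rw [hsum, hC]
  have hσ : ∀ j, (univ.filter fun a => orbSize (decomposeFin.symm (x.succ, π)) a = j).card
      = M j + if j = k + 1 then k + 1 else 0 := by
    intro j
    rw [card_filter, Fin.sum_univ_succ]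
    have hσ0 : orbSize (decomposeFin.symm (x.succ, π)) 0 = 1 + k := by
      simp [orbSize_insert, SameCycle.refl, ← hk]
    have hσs : ∀ y : Fin n, orbSize (decomposeFin.symm (x.succ, π)) y.succ
        = (if π.SameCycle y x then 1 else 0) + orbSize π y := fun y => orbSize_insert π x y.succ
    simp only [hσ0, hσs]
    rw [← card_filter]
    have hsum : (univ.filter fun y => (if π.SameCycle y x then 1 else 0) + orbSize π y = j).card
        = M j + if j = k + 1 then (univ.filter fun y => π.SameCycle y x).card else 0 := by
      rw [hM]
      simp only [card_filter]
      split_ifs with hj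
      · rw [← sum_add_distrib]
        refine sum_congr rfl fun y _ => ?_
        by_cases hy : π.SameCycle y x
        · simp [hy, hsize y hy, hj, add_comm]
        · simp [hy]
      · rw [add_zero]
        refine sum_congr rfl fun y _ => ?_
        by_cases hy : π.SameCycle y x
        · have : 1 + k ≠ j := fun h => hj (by omega)
          simp [hy, hsize y hy, this]
        · simp [hy]
    rw [hsum, hC]
    split_ifs <;> omega
  simp only [cycleCount_eq_s6, hπ, hσ]
  refine ⟨?_, ?_, fun j h1 h2 => ?_⟩
  · simp [Nat.add_div_right _ hkpos]
  · simp [Nat.add_div_right _ (Nat.succ_pos k)]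
  · simp [h1, h2]

/-- A new fixed point leaves the number of `j`-cycles unchanged for `j ≠ 1`. -/
lemma cycleCount_fixed {n : ℕ} (π : Perm (Fin n)) {j : ℕ} (hj : j ≠ 1) :
    cycleCount (decomposeFin.symm (0, π)) j = cycleCount π j := by
  set σ := decomposeFin.symm ((0 : Fin (n + 1)), π) with hσ
  have h0 : σ 0 = 0 := by simp [hσ]
  have hs : ∀ y, σ y.succ = (π y).succ := fun y => by simp [hσ]
  have h0s : ∀ y : Fin n, ¬ σ.SameCycle 0 y.succ := fun y h =>
    (Fin.succ_ne_zero y) ((h.eq_of_left h0).symm)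
  have hss : ∀ y z : Fin n, σ.SameCycle y.succ z.succ ↔ π.SameCycle y z := by
    intro y z
    constructor
    · intro h
      -- Any value may be given to the retraction at the isolated point `0`.
      have := SameCycle.map_of_step (σ := σ) (π := π)
        (fun c => (Fin.cases y id c : Fin n)) (fun c => ?_) h
      · simpa using this
      · refine Fin.cases ?_ (fun w => ?_) c
        · simp [h0, SameCycle.refl]
        · rw [hs]
          simp [SameCycle.refl]
    · refine SameCycle.map_of_step Fin.succ fun w => ?_
      rw [← hs]
      exact sameCycle_apply_right.mpr (SameCycle.refl _ _)
  have ho0 : orbSize σ 0 = 1 := by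
    rw [orbSize, card_filter, Fin.sum_univ_succ]
    simp [h0s, SameCycle.refl]
  have hos : ∀ y : Fin n, orbSize σ y.succ = orbSize π y := by
    intro y
    rw [orbSize, orbSize, card_filter, card_filter, Fin.sum_univ_succ]
    simp [hss, sameCycle_comm (y := (0 : Fin (n + 1))), h0s]
  rw [cycleCount_eq_s6, cycleCount_eq_s6, card_filter, card_filter, Fin.sum_univ_succ]
  simp [ho0, hos, hj.symm]

lemma cycleCount_top {n : ℕ} (π : Perm (Fin n)) : cycleCount π (n + 1) = 0 := by
  rw [cycleCount_eq_s6, filter_eq_empty_iff.mpr, card_empty, Nat.zero_div]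
  intro x _ h
  have := orbSize_le π x
  omega

/-- No insertion of a new point increases the weight of a permutation. -/
lemma weight_insert_le {n : ℕ} {p : ℕ → ℝ} (hp1 : p 1 = 1)
    (hmono : ∀ j, 1 ≤ j → j ≤ n → p (j + 1) ≤ p j)
    (hnonneg : ∀ j, j ∈ Icc 1 (n + 1) → 0 ≤ p j) (q : Fin (n + 1)) (π : Perm (Fin n)) :
    ∏ j ∈ Icc 1 (n + 1), p j ^ cycleCount (decomposeFin.symm (q, π)) j
      ≤ ∏ j ∈ Icc 1 n, p j ^ cycleCount π j := by
  have hext : ∏ j ∈ Icc 1 n, p j ^ cycleCount π j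
      = ∏ j ∈ Icc 1 (n + 1), p j ^ cycleCount π j := by
    rw [prod_Icc_succ_top (by omega), cycleCount_top, pow_zero, mul_one]
  rw [hext]
  refine Fin.cases ?_ (fun x => ?_) q
  · refine (prod_congr rfl fun j _ => ?_).le
    by_cases hj : j = 1
    · simp [hj, hp1]
    · rw [cycleCount_fixed π hj]
  · obtain ⟨h1, h2, h3⟩ := cycleCount_insert π x
    have hkpos := orbSize_pos π x
    have hkn := orbSize_le π x
    generalize orbSize π x = k at *
    have hk : k ∈ Icc 1 (n + 1) := by simp; omega
    have hk' : k + 1 ∈ (Icc 1 (n + 1)).erase k := by simp; omega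
    rw [← mul_prod_erase _ _ hk, ← mul_prod_erase _ _ hk', ← mul_prod_erase _ _ hk,
      ← mul_prod_erase _ _ hk', h1, h2]
    have hrest : ∏ j ∈ ((Icc 1 (n + 1)).erase k).erase (k + 1),
          p j ^ cycleCount (decomposeFin.symm (x.succ, π)) j
        = ∏ j ∈ ((Icc 1 (n + 1)).erase k).erase (k + 1), p j ^ cycleCount π j := by
      refine prod_congr rfl fun j hj => ?_
      rw [mem_erase, mem_erase] at hj
      rw [h3 j hj.2.1 hj.1]
    rw [hrest]
    have hR : 0 ≤ ∏ j ∈ ((Icc 1 (n + 1)).erase k).erase (k + 1), p j ^ cycleCount π j :=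
      prod_nonneg fun j hj => pow_nonneg (hnonneg j (mem_of_mem_erase (mem_of_mem_erase hj))) _
    have hA := pow_nonneg (hnonneg k hk) (cycleCount (decomposeFin.symm (x.succ, π)) k)
    have hB := pow_nonneg (hnonneg (k + 1) (mem_of_mem_erase hk')) (cycleCount π (k + 1))
    have hle := mul_le_mul_of_nonneg_left (hmono k hkpos hkn) (mul_nonneg (mul_nonneg hA hB) hR)
    rw [pow_succ, pow_succ]
    linarith

theorem cycle_index_bell_monotone (n : ℕ) (hn : 1 ≤ n) (p : ℕ → ℝ)
    (hp1 : p 1 = 1)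
    (hmono : ∀ j, 1 ≤ j → j ≤ n → p (j + 1) ≤ p j)
    (hpos : 0 ≤ p (n + 1)) :
    (1 / (Nat.factorial (n + 1) : ℝ)) *
        ∑ π : Equiv.Perm (Fin (n + 1)), ∏ j ∈ Finset.Icc 1 (n + 1), p j ^ cycleCount π j
      ≤ (1 / (Nat.factorial n : ℝ)) *
        ∑ π : Equiv.Perm (Fin n), ∏ j ∈ Finset.Icc 1 n, p j ^ cycleCount π j := by
  have hnonneg : ∀ j, j ∈ Icc 1 (n + 1) → 0 ≤ p j := by
    intro j hj
    rw [mem_Icc] at hj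
    refine Nat.decreasingInduction' (P := fun i => 0 ≤ p i) (fun i hi hji ih => ?_) hj.2 hpos
    exact ih.trans (hmono i (hj.1.trans hji) (by omega))
  have hsum : ∑ π : Perm (Fin (n + 1)), ∏ j ∈ Icc 1 (n + 1), p j ^ cycleCount π j
      ≤ (n + 1 : ℝ) * ∑ π : Perm (Fin n), ∏ j ∈ Icc 1 n, p j ^ cycleCount π j := by
    rw [← Equiv.sum_comp decomposeFin.symm, Fintype.sum_prod_type]
    refine (sum_le_sum fun q _ => sum_le_sum fun π _ =>
      weight_insert_le hp1 hmono hnonneg q π).trans_eq ?_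
    simp
  refine (mul_le_mul_of_nonneg_left hsum (by positivity)).trans_eq ?_
  rw [Nat.factorial_succ]
  push_cast
  field_simp
end

section
/- Let r ≥ 1 and let λ : Fin r → ℝ satisfy 0 ≤ λ_i < 1 for all i and ∑_i λ_i = 1 (the eigenvalues of a mixed, i.e., non-pure, density matrix). Define p_j = ∑_i λ_i^j and Z_n = (1/n!) ∑_{π ∈ S_n} ∏_{j=1}^{n} p_j^{c_j(π)}. Then Z_{k+1} < Z_k for every k ≥ 1; that is, the acceptance probability p^{(k)} of the bipartite pure-state separability test is strictly decreasing in k. -/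
open Classical in
/-- The cycle monomial of `π` is the weighted count of the words fixed by `π`: such words are
the functions on the set of cycles, and a cycle of length `j` contributes a factor `p_j`. -/
lemma prod_powerSum_cycleCount {α : Type*} [Fintype α] [DecidableEq α]
    (π : Equiv.Perm α) {r : ℕ} (lam : Fin r → ℝ) :
    ∏ j ∈ Finset.Icc 1 (Fintype.card α), (∑ i, lam i ^ j) ^ cycleCount π j
      = ∑ f : α → Fin r, if f ∘ π = f then ∏ x, lam (f x) else 0 := by
  let s := Equiv.Perm.SameCycle.setoid π
  -- `Quotient s` is the set of cycles of `π`, and `sz` is the cycle length.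
  let sz : Quotient s → ℕ := fun q => (Finset.univ.filter fun x : α => (⟦x⟧ : Quotient s) = q).card
  have hrel : ∀ x y : α, (⟦x⟧ : Quotient s) = ⟦y⟧ ↔ π.SameCycle x y := fun x y => Quotient.eq
  have hsz : ∀ x : α, (Finset.univ.filter fun y : α => π.SameCycle x y).card = sz ⟦x⟧ := by
    intro x
    simp only [sz, hrel]
    congr 1; ext y; simp [Equiv.Perm.sameCycle_comm]
  have hszpos : ∀ q, 1 ≤ sz q := by
    intro q
    induction q using Quotient.inductionOn with | _ x =>
    exact Finset.card_pos.mpr ⟨x, by simp⟩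
  have hcc : ∀ j, 1 ≤ j → cycleCount π j = (Finset.univ.filter fun q => sz q = j).card := by
    intro j hj
    unfold cycleCount
    simp only [hsz]
    rw [Finset.card_eq_sum_card_fiberwise (f := fun x : α => (⟦x⟧ : Quotient s))
      (t := Finset.univ.filter fun q => sz q = j)]
    · rw [Finset.sum_congr rfl (g := fun _ => j), Finset.sum_const, smul_eq_mul,
        Nat.mul_div_cancel _ hj]
      intro q hq
      simp only [Finset.mem_filter, Finset.mem_univ, true_and] at hq
      rw [← hq, Finset.filter_filter]
      simp only [sz]
      congr 1; ext x
      simp only [Finset.mem_filter, Finset.mem_univ, true_and]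
      constructor
      · exact fun h => h.2
      · intro h; exact ⟨by rw [h], h⟩
    · intro x hx
      simpa using hx
  calc _ = ∏ q : Quotient s, ∑ i, lam i ^ sz q := by
        rw [← Finset.prod_fiberwise_of_maps_to (s := Finset.univ) (g := sz)
          (t := Finset.Icc 1 (Fintype.card α))
          (fun q _ => Finset.mem_Icc.mpr ⟨hszpos q, Finset.card_le_univ _⟩)]
        refine Finset.prod_congr rfl fun j hj => ?_
        rw [hcc j (Finset.mem_Icc.mp hj).1, Finset.prod_congr rfl (g := fun _ => ∑ i, lam i ^ j),
          Finset.prod_const]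
        intro q hq
        rw [(Finset.mem_filter.mp hq).2]
    _ = ∑ f : Quotient s → Fin r, ∏ q, lam (f q) ^ sz q := by
        rw [Finset.prod_univ_sum, Fintype.piFinset_univ]
    _ = ∑ f : Quotient s → Fin r, ∏ x, lam (f ⟦x⟧) := by
        refine Finset.sum_congr rfl fun f _ => ?_
        rw [← Finset.prod_fiberwise (s := Finset.univ) (fun x : α => (⟦x⟧ : Quotient s))]
        refine Finset.prod_congr rfl fun q _ => ?_
        rw [Finset.prod_congr rfl (g := fun _ => lam (f q)), Finset.prod_const]
        intro x hx
        rw [(Finset.mem_filter.mp hx).2]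
    _ = _ := by
        rw [← Finset.sum_filter]
        refine Finset.sum_bij (fun f _ => fun x => f ⟦x⟧) ?_ ?_ ?_ ?_
        · intro f _
          simp only [Finset.mem_filter, Finset.mem_univ, true_and]
          funext x
          exact congrArg f ((hrel _ _).2 (Equiv.Perm.sameCycle_apply_left.2
            (Equiv.Perm.SameCycle.refl _ _)))
        · intro f _ g _ h
          funext q
          induction q using Quotient.inductionOn with | _ x =>
          exact congrFun h x
        · intro f hf
          simp only [Finset.mem_filter, Finset.mem_univ, true_and] at hf
          refine ⟨Quotient.lift f ?_, Finset.mem_univ _, rfl⟩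
          rintro x y hxy
          obtain ⟨n, rfl⟩ := ((hrel x y).1 (Quotient.sound hxy)).exists_nat_pow_eq
          have hiter : ∀ m : ℕ, f ((π ^ m) x) = f x := by
            intro m
            induction m with
            | zero => rfl
            | succ m ih => rw [pow_succ', Equiv.Perm.mul_apply, ← ih]; exact congrFun hf _
          exact (hiter n).symm
        · intros; rfl
/-- The order of the stabilizer of the word `f` under permutations of its positions, written as the
product over letters `i` of `m_i!`, with `m_i` the number of occurrences of `i` in `f`. -/
def stabCard {n r : ℕ} (f : Fin n → Fin r) : ℕ :=
  ∏ i, (Fintype.card {x // f x = i}).factorial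

lemma stabCard_cons {n r : ℕ} (i : Fin r) (g : Fin n → Fin r) :
    stabCard (Fin.cons i g : Fin (n + 1) → Fin r) =
      (Fintype.card {x // g x = i} + 1) * stabCard g := by
  have h : ∀ a, Fintype.card {x // (Fin.cons i g : Fin (n + 1) → Fin r) x = a}
      = (if i = a then 1 else 0) + Fintype.card {x // g x = a} := by
    intro a
    rw [Fintype.card_subtype, Fintype.card_subtype, Fin.card_filter_univ_succ]
    simp; split_ifs <;> omega
  unfold stabCard
  simp only [h]
  rw [← Finset.mul_prod_erase _ _ (Finset.mem_univ i),
    ← Finset.mul_prod_erase _ (fun a => (Fintype.card {x // g x = a}).factorial) (Finset.mem_univ i),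
    if_pos rfl, add_comm 1, Nat.factorial_succ, mul_assoc]
  congr 2
  refine Finset.prod_congr rfl fun a ha => ?_
  rw [if_neg (Finset.ne_of_mem_erase ha).symm, zero_add]

/-- Burnside-style double counting: `n! Z_n` is a sum over words weighted by stabilizer orders. -/
lemma sum_perm_eq {n r : ℕ} (lam : Fin r → ℝ) :
    ∑ π : Equiv.Perm (Fin n), ∏ j ∈ Finset.Icc 1 n, (∑ i, lam i ^ j) ^ cycleCount π j
      = ∑ f : Fin n → Fin r, stabCard f * ∏ x, lam (f x) := by
  classical
  have := fun π : Equiv.Perm (Fin n) => prod_powerSum_cycleCount π lam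
  simp only [Fintype.card_fin] at this
  simp only [this]
  rw [Finset.sum_comm]
  refine Finset.sum_congr rfl fun f _ => ?_
  rw [← Finset.sum_filter, Finset.sum_const, nsmul_eq_mul, stabCard, ← DomMulAct.stabilizer_card,
    Fintype.card_subtype]

theorem acceptance_prob_strictly_decreasing (r : ℕ) (hr : 1 ≤ r) (lam : Fin r → ℝ)
    (h0 : ∀ i, 0 ≤ lam i) (h1 : ∀ i, lam i < 1) (hsum : ∑ i, lam i = 1)
    (p : ℕ → ℝ) (hp : ∀ j, p j = ∑ i, lam i ^ j)
    (Z : ℕ → ℝ)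
    (hZ : ∀ n, Z n = (1 / (Nat.factorial n : ℝ)) *
      ∑ π : Equiv.Perm (Fin n), ∏ j ∈ Finset.Icc 1 n, p j ^ cycleCount π j)
    (k : ℕ) (hk : 1 ≤ k) :
    Z (k + 1) < Z k := by
  simp only [hZ, hp, sum_perm_eq]
  obtain ⟨a, ha⟩ : ∃ a, 0 < lam a := by
    by_contra! h
    have := Finset.sum_nonpos fun i (_ : i ∈ Finset.univ) => h i
    linarith
  obtain ⟨b, hba, hb⟩ : ∃ b, b ≠ a ∧ 0 < lam b := by
    by_contra! h
    have h2 := Finset.sum_nonpos fun i (hi : i ∈ Finset.univ.erase a) =>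
      h i (Finset.ne_of_mem_erase hi)
    have h3 := Finset.add_sum_erase Finset.univ lam (Finset.mem_univ a)
    linarith [h1 a]
  have hstab : ∀ g : Fin k → Fin r, 0 < stabCard g := fun g =>
    Finset.prod_pos fun i _ => Nat.factorial_pos _
  have hcard : ∀ (g : Fin k → Fin r) i, Fintype.card {x // g x = i} ≤ k := fun g i =>
    (Fintype.card_subtype_le _).trans_eq (Fintype.card_fin k)
  have key : ∑ f : Fin (k + 1) → Fin r, (stabCard f : ℝ) * ∏ x, lam (f x)
      < (k + 1) * ∑ g : Fin k → Fin r, (stabCard g : ℝ) * ∏ x, lam (g x) := by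
    calc _ = ∑ q : Fin r × (Fin k → Fin r), ((Fintype.card {x // q.2 x = q.1} : ℝ) + 1) *
          (lam q.1 * (stabCard q.2 * ∏ x, lam (q.2 x))) := by
          rw [← (Fin.consEquiv fun _ : Fin (k + 1) => Fin r).sum_comp]
          refine Finset.sum_congr rfl fun q _ => ?_
          simp only [Fin.consEquiv, Equiv.coe_fn_mk, stabCard_cons, Fin.prod_univ_succ,
            Fin.cons_zero, Fin.cons_succ]
          push_cast
          ring
      _ < ∑ q : Fin r × (Fin k → Fin r), ((k : ℝ) + 1) *
          (lam q.1 * (stabCard q.2 * ∏ x, lam (q.2 x))) := by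
          -- The inequality is strict at the word `b a a ⋯ a`, whose first letter does not recur.
          refine Finset.sum_lt_sum (fun q _ => ?_) ⟨(b, fun _ => a), Finset.mem_univ _, ?_⟩
          · refine mul_le_mul_of_nonneg_right (by exact_mod_cast Nat.succ_le_succ (hcard q.2 q.1)) ?_
            exact mul_nonneg (h0 _) (mul_nonneg (Nat.cast_nonneg _)
              (Finset.prod_nonneg fun x _ => h0 _))
          · refine mul_lt_mul_of_pos_right ?_ ?_
            · have : Fintype.card {x : Fin k // a = b} = 0 := by simp [hba.symm]
              simp only [this]
              simp; omega
            · exact mul_pos hb (mul_pos (Nat.cast_pos.2 (hstab _)) (Finset.prod_pos fun x _ => ha))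
      _ = _ := by
          rw [← Finset.mul_sum, Fintype.sum_prod_type]
          simp only []
          rw [← Finset.sum_mul_sum, hsum, one_mul]
  rw [Nat.factorial_succ]
  have hf : (0 : ℝ) < k.factorial := by positivity
  push_cast
  rw [one_div_mul_eq_div, one_div_mul_eq_div, div_lt_div_iff₀ (by positivity) hf]
  nlinarith
end

section
/- Let d ≥ 1, let ρ be a d×d complex Hermitian positive semidefinite matrix with tr(ρ) = 1, let k ≥ 1, and let G be a nontrivial subgroup of the permutation group of Fin k. Then (1/|G|) ∑_{π ∈ G} ∏_{j=1}^{k} (tr(ρ^j))^{c_j(π)} = 1 if and only if ρ is a pure state, i.e., if and only if there exists a unit vector v : Fin d → ℂ with ρ = v v† (the rank-one outer product of v with its conjugate). -/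
/-!
The numbers `p j = tr (ρ ^ j) = ∑ i, λ i ^ j`, with `λ` the eigenvalues of `ρ` (nonnegative, of
sum 1), lie in `[0, 1]` for `j ≥ 1`. Hence every summand of the cycle index lies in `[0, 1]`, and
an average of such numbers is 1 only if each of them is 1. A nontrivial group contains a
permutation with a cycle of some length `m ≥ 2` (`exists_cycleCount_pos`), and the corresponding
summand has `p m` as a factor, so `p m = 1`. Comparing `∑ λ i ^ m = 1` with `∑ λ i = 1` termwise
forces `λ i ∈ {0, 1}`, so exactly one eigenvalue is 1 and `ρ` is the projection onto the
corresponding eigenvector (`eq_vecMulVec_of_eigenvalues`).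

Conversely, a pure state is idempotent, so all `tr (ρ ^ j)` with `j ≥ 1` are equal to 1.
-/

open Matrix
open scoped ComplexOrder

/-- A non-identity permutation has a cycle of some length `m ≥ 2`. -/
lemma exists_cycleCount_pos {k : ℕ} (π : Equiv.Perm (Fin k)) (hπ : π ≠ 1) :
    ∃ m, 2 ≤ m ∧ m ≤ k ∧ cycleCount π m ≠ 0 := by
  obtain ⟨x, hx⟩ : ∃ x, π x ≠ x := by
    by_contra! h
    exact hπ (Equiv.ext h)
  refine ⟨(Finset.univ.filter fun y => π.SameCycle x y).card, ?_, ?_, ?_⟩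
  · refine Finset.one_lt_card.2 ⟨x, ?_, π x, ?_, hx.symm⟩ <;> simp [Equiv.Perm.SameCycle.refl]
  · simpa using Finset.card_le_univ (Finset.univ.filter fun y => π.SameCycle x y)
  · have hpos : 0 < (Finset.univ.filter fun y => π.SameCycle x y).card :=
      Finset.card_pos.2 ⟨x, by simp [Equiv.Perm.SameCycle.refl]⟩
    refine (Nat.div_pos (Finset.card_le_card fun z hz => ?_) hpos).ne'
    have hz' : π.SameCycle x z := by simpa using hz
    -- Every `z` in the cycle of `x` has the same cycle as `x`, so its cycle has the same size.
    simp only [Finset.mem_filter, Finset.mem_univ, true_and]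
    congr 1
    ext y
    simp only [Finset.mem_filter, Finset.mem_univ, true_and]
    exact ⟨fun h => hz'.trans h, fun h => hz'.symm.trans h⟩

lemma trace_pow_eq_sum_eigenvalues {d : ℕ} {ρ : Matrix (Fin d) (Fin d) ℂ} (hρ : ρ.IsHermitian)
    (j : ℕ) : (ρ ^ j).trace = ((∑ i, hρ.eigenvalues i ^ j : ℝ) : ℂ) := by
  conv_lhs => rw [hρ.spectral_theorem, ← map_pow, Unitary.conjStarAlgAut_apply,
    Matrix.trace_mul_cycle, Unitary.coe_star_mul_self, one_mul, Matrix.diagonal_pow,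
    Matrix.trace_diagonal]
  simp

/-- A Hermitian matrix whose spectrum is a single 1 and otherwise 0 is the outer product of the
eigenvector for the eigenvalue 1. -/
lemma eq_vecMulVec_of_eigenvalues {d : ℕ} {ρ : Matrix (Fin d) (Fin d) ℂ} (hρ : ρ.IsHermitian)
    (i₀ : Fin d) (h₁ : hρ.eigenvalues i₀ = 1) (h₀ : ∀ i, i ≠ i₀ → hρ.eigenvalues i = 0) :
    ∃ v : Fin d → ℂ, (∑ i, ‖v i‖ ^ 2 = (1 : ℝ)) ∧ ρ = vecMulVec v (star v) := by
  refine ⟨hρ.eigenvectorBasis i₀, ?_, ?_⟩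
  · rw [← EuclideanSpace.norm_sq_eq, hρ.eigenvectorBasis.norm_eq_one, one_pow]
  · ext a b
    conv_lhs => rw [hρ.spectral_theorem, Unitary.conjStarAlgAut_apply, Matrix.mul_apply]
    rw [Finset.sum_eq_single i₀]
    · simp [Matrix.mul_diagonal, h₁, vecMulVec_apply, Matrix.star_apply]
    · intro i _ hi
      simp [Matrix.mul_diagonal, h₀ i hi]
    · simp

/-- Probability weights with `∑ i, l i ^ m = 1` for some `m ≥ 2` form a point mass. -/
lemma exists_point_mass {ι : Type*} [Fintype ι] (l : ι → ℝ) (h0 : ∀ i, 0 ≤ l i)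
    (hsum : ∑ i, l i = 1) {m : ℕ} (hm : 2 ≤ m) (hpow : ∑ i, l i ^ m = 1) :
    ∃ i₀, l i₀ = 1 ∧ ∀ i, i ≠ i₀ → l i = 0 := by
  classical
  have hle : ∀ i, l i ≤ 1 := fun i => by
    rw [← hsum]
    exact Finset.single_le_sum (fun i _ => h0 i) (Finset.mem_univ i)
  have heq : ∀ i, l i ^ m = l i := fun i =>
    (Finset.sum_eq_sum_iff_of_le fun i _ => pow_le_of_le_one (h0 i) (hle i) (by omega)).1
      (hpow.trans hsum.symm) i (Finset.mem_univ i)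
  obtain ⟨i₀, -, hi₀⟩ : ∃ i ∈ Finset.univ, l i ≠ 0 :=
    Finset.exists_ne_zero_of_sum_ne_zero (by rw [hsum]; exact one_ne_zero)
  have h1 : l i₀ = 1 := by
    by_contra hne
    have hlt : l i₀ ^ m < l i₀ :=
      pow_lt_self_of_lt_one₀ ((h0 i₀).lt_of_ne' hi₀) ((hle i₀).lt_of_ne hne) (by omega)
    exact hlt.ne (heq i₀)
  refine ⟨i₀, h1, fun i hi => ?_⟩
  have hrest : ∑ i ∈ Finset.univ.erase i₀, l i = 0 := by
    have := Finset.add_sum_erase Finset.univ l (Finset.mem_univ i₀)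
    linarith
  exact (Finset.sum_eq_zero_iff_of_nonneg fun i _ => h0 i).1 hrest i (by simp [hi])

theorem cycle_index_acceptance_eq_one_iff_pure (d k : ℕ) (hd : 1 ≤ d) (hk : 1 ≤ k)
    (ρ : Matrix (Fin d) (Fin d) ℂ) (hρ : ρ.PosSemidef) (htr : ρ.trace = 1)
    (G : Subgroup (Equiv.Perm (Fin k))) [Fintype G] (hG : G ≠ ⊥) :
    (1 / (Fintype.card G : ℂ)) *
        ∑ π : G, ∏ j ∈ Finset.Icc 1 k,
          ((ρ ^ j).trace) ^ cycleCount (π : Equiv.Perm (Fin k)) j = 1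
      ↔ ∃ v : Fin d → ℂ, (∑ i, ‖v i‖ ^ 2 = (1 : ℝ)) ∧ ρ = vecMulVec v (star v) := by
  classical
  have hcard : (Fintype.card G : ℂ) ≠ 0 := Nat.cast_ne_zero.2 Fintype.card_ne_zero
  constructor
  · intro h
    have hH := hρ.isHermitian
    have h0 : ∀ i, 0 ≤ hH.eigenvalues i := hρ.eigenvalues_nonneg
    set p : ℕ → ℝ := fun j => ∑ i, hH.eigenvalues i ^ j with hp
    have hpt : ∀ j, (ρ ^ j).trace = (p j : ℂ) := trace_pow_eq_sum_eigenvalues hH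
    have hsum : ∑ i, hH.eigenvalues i = 1 := by
      have h1 := hpt 1
      rw [pow_one, htr] at h1
      have h2 : p 1 = 1 := by exact_mod_cast h1.symm
      simpa [hp] using h2
    have hle : ∀ i, hH.eigenvalues i ≤ 1 := fun i => by
      rw [← hsum]
      exact Finset.single_le_sum (fun i _ => h0 i) (Finset.mem_univ i)
    have hp0 : ∀ j, 0 ≤ p j := fun j => Finset.sum_nonneg fun i _ => pow_nonneg (h0 i) j
    have hp1 : ∀ j, 1 ≤ j → p j ≤ 1 := fun j hj => by
      rw [← hsum]
      exact Finset.sum_le_sum fun i _ => pow_le_of_le_one (h0 i) (hle i) (by omega)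
    set t : G → ℝ := fun π => ∏ j ∈ Finset.Icc 1 k,
      p j ^ cycleCount (π : Equiv.Perm (Fin k)) j with ht
    have hfac : ∀ (π : G), ∀ j ∈ Finset.Icc 1 k,
        p j ^ cycleCount (π : Equiv.Perm (Fin k)) j ≤ 1 := fun π j hj =>
      pow_le_one₀ (hp0 j) (hp1 j (Finset.mem_Icc.1 hj).1)
    have ht1 : ∀ π, t π ≤ 1 := fun π =>
      Finset.prod_le_one (fun j _ => pow_nonneg (hp0 j) _) (hfac π)
    have htsum : ∑ π, t π = ∑ _π : G, (1 : ℝ) := by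
      simp only [hpt] at h
      rw [one_div, inv_mul_eq_one₀ hcard] at h
      have h' : (Fintype.card G : ℝ) = ∑ π, t π := by
        simp only [ht]
        exact_mod_cast h
      simp [← h']
    have hteq : ∀ π, t π = 1 := fun π =>
      (Finset.sum_eq_sum_iff_of_le fun π _ => ht1 π).1 htsum π (Finset.mem_univ π)
    obtain ⟨π, hπ1⟩ := Subgroup.ne_bot_iff_exists_ne_one.1 hG
    have hπ : (π : Equiv.Perm (Fin k)) ≠ 1 := fun h => hπ1 (Subtype.ext h)
    obtain ⟨m, hm2, hmk, hc⟩ := exists_cycleCount_pos _ hπ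
    have hmem : m ∈ Finset.Icc 1 k := Finset.mem_Icc.2 ⟨by omega, hmk⟩
    have hpm : p m = 1 := by
      by_contra hne
      have hlt : p m ^ cycleCount (π : Equiv.Perm (Fin k)) m < 1 :=
        pow_lt_one₀ (hp0 m) ((hp1 m (by omega)).lt_of_ne hne) hc
      have hprod := Finset.mul_prod_erase (Finset.Icc 1 k)
        (fun j => p j ^ cycleCount (π : Equiv.Perm (Fin k)) j) hmem
      have hrest : ∏ j ∈ (Finset.Icc 1 k).erase m,
          p j ^ cycleCount (π : Equiv.Perm (Fin k)) j ≤ 1 :=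
        Finset.prod_le_one (fun j _ => pow_nonneg (hp0 j) _)
          fun j hj => hfac π j (Finset.mem_of_mem_erase hj)
      have hlt' := (mul_le_of_le_one_right (pow_nonneg (hp0 m) _) hrest).trans_lt hlt
      exact (hprod ▸ hlt').ne (hteq π)
    obtain ⟨i₀, h₁, h₀⟩ := exists_point_mass hH.eigenvalues h0 hsum hm2 hpm
    exact eq_vecMulVec_of_eigenvalues hH i₀ h₁ h₀
  · rintro ⟨v, hv, rfl⟩
    have hdot : star v ⬝ᵥ v = 1 := by
      rw [dotProduct_comm, ← Matrix.trace_vecMulVec, htr]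
    have hidem : IsIdempotentElem (vecMulVec v (star v)) := by
      rw [IsIdempotentElem, vecMulVec_mul_vecMulVec, hdot]
      simp
    have hterm : ∀ π : G, ∏ j ∈ Finset.Icc 1 k, ((vecMulVec v (star v) ^ j).trace) ^
        cycleCount (π : Equiv.Perm (Fin k)) j = 1 := fun π =>
      Finset.prod_eq_one fun j hj => by
        rw [hidem.pow_eq (by have := (Finset.mem_Icc.1 hj).1; omega), htr, one_pow]
    simp [hterm, hcard]
end

section
/- Let d ≥ 1, let ρ be a d×d complex Hermitian positive semidefinite matrix with tr(ρ) = 1, and let k ≥ 3 be odd. Index the tensor factors by ZMod k; for a : ZMod k let r_a be the rotation x ↦ x + a and s_a the reflection x ↦ a − x (2k permutations in total, forming the dihedral group D_k). Then (1/(2k)) ∑_{a : ZMod k} [tr(W(r_a) * ρ^{⊗ ZMod k}) + tr(W(s_a) * ρ^{⊗ ZMod k})] = (1/2)·(1/k) ∑_{m | k} φ(m) (tr(ρ^m))^{k/m} + (1/2)·(tr(ρ^2))^{(k−1)/2}. -/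
/-!
For a self-map `f` of the index set, put `cyc ρ f = ∑ y, ∏ i, ρ (y i) (y (f i))`; this is
`tr (W(π) ρ^{⊗ι})` when `f = π` (`trace_permOp_mul`). The quantity is invariant under conjugation
of `f` by a bijection, multiplicative over invariant decompositions of the index set
(`cyc_sum`, `cyc_prod`), and equals `tr (ρ ^ m)` on an `m`-cycle (`cyc_cycle`).

A rotation by `a` of order `m` acts on `ZMod k ≃ (ZMod k ⧸ ⟨a⟩) × ⟨a⟩` through the second factor,
so it contributes `(tr ρ^m)^(k/m)`, and there are `φ m` elements of order `m` in `ZMod k`. For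
`k = 2 n + 1` a reflection has exactly one fixed point and `n` two-cycles, so it contributes
`tr ρ * (tr ρ²)^n`, where `tr ρ = 1`.
-/

open Matrix
open scoped ComplexOrder

/-- The contraction `∑ y, ∏ i, ρ (y i) (y (f i))` of copies of `ρ` along a self-map `f`. -/
noncomputable def cyc {d : ℕ} (ρ : Matrix (Fin d) (Fin d) ℂ) {ι : Type} [Fintype ι]
    [DecidableEq ι] (f : ι → ι) : ℂ :=
  ∑ y : ι → Fin d, ∏ i, ρ (y i) (y (f i))

theorem trace_permOp_mul {d : ℕ} (ρ : Matrix (Fin d) (Fin d) ℂ) {ι : Type} [Fintype ι]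
    [DecidableEq ι] (π : Equiv.Perm ι) :
    (permOp d π * tensorPow ρ ι).trace = cyc ρ π := by
  simp only [Matrix.trace, Matrix.diag, Matrix.mul_apply, permOp, tensorPow, Matrix.of_apply, cyc]
  rw [Finset.sum_comm]
  simp

theorem cyc_congr {d : ℕ} (ρ : Matrix (Fin d) (Fin d) ℂ) {ι κ : Type} [Fintype ι]
    [DecidableEq ι] [Fintype κ] [DecidableEq κ] (e : κ ≃ ι) {f : ι → ι} {g : κ → κ}
    (h : ∀ b, f (e b) = e (g b)) : cyc ρ f = cyc ρ g := by
  unfold cyc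
  refine Fintype.sum_equiv (e.symm.arrowCongr (Equiv.refl _)) _ _ fun y => ?_
  rw [← Equiv.prod_comp e]
  simp [Equiv.arrowCongr, h]

theorem cyc_prod {d : ℕ} (ρ : Matrix (Fin d) (Fin d) ℂ) {α β : Type} [Fintype α]
    [DecidableEq α] [Fintype β] [DecidableEq β] (g : β → β) :
    cyc ρ (fun p : α × β => (p.1, g p.2)) = cyc ρ g ^ Fintype.card α := by
  unfold cyc
  have h := Finset.prod_univ_sum (fun _ : α => (Finset.univ : Finset (β → Fin d)))
    (fun _ y => ∏ i, ρ (y i) (y (g i)))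
  rw [Finset.prod_const, Finset.card_univ, Fintype.piFinset_univ] at h
  rw [h]
  refine Fintype.sum_equiv (Equiv.curry α β (Fin d)) _ _ fun y => ?_
  simp [Fintype.prod_prod_type, Function.curry]

theorem cyc_sum {d : ℕ} (ρ : Matrix (Fin d) (Fin d) ℂ) {α β : Type} [Fintype α]
    [DecidableEq α] [Fintype β] [DecidableEq β] (f : α → α) (g : β → β) :
    cyc ρ (Sum.map f g) = cyc ρ f * cyc ρ g := by
  unfold cyc
  rw [Finset.sum_mul_sum, ← Fintype.sum_prod_type']
  refine Fintype.sum_equiv (Equiv.sumArrowEquivProdArrow α β (Fin d)) _ _ fun y => ?_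
  simp [Fintype.prod_sum_type, Equiv.sumArrowEquivProdArrow]

/-- Entries of `ρ ^ n` as sums over paths of length `n`, tested against a function `F` of the
two endpoints. -/
theorem sum_path {d : ℕ} (ρ : Matrix (Fin d) (Fin d) ℂ) (n : ℕ) (F : Fin d → Fin d → ℂ) :
    ∑ z : Fin (n + 1) → Fin d, (∏ i : Fin n, ρ (z i.castSucc) (z i.succ)) * F (z 0) (z (Fin.last n))
      = ∑ x, ∑ y, (ρ ^ n) x y * F x y := by
  induction n generalizing F with
  | zero =>
    rw [Fintype.sum_equiv (Equiv.funUnique (Fin 1) (Fin d)) _ (fun x => F x x)]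
    · simp [Matrix.one_apply]
    · intro z; simp
  | succ n ih =>
    rw [← (Fin.consEquiv fun _ => Fin d).sum_comp, Fintype.sum_prod_type]
    refine Finset.sum_congr rfl fun x _ => ?_
    have := ih (fun u v => ρ x u * F x v)
    simp only [pow_succ', Matrix.mul_apply, Finset.sum_mul]
    rw [Finset.sum_comm]
    refine Eq.trans ?_ (this.trans ?_)
    · refine Finset.sum_congr rfl fun z _ => ?_
      rw [Fin.prod_univ_succ]
      simp [Fin.consEquiv, ← Fin.succ_last]
      ring
    · exact Finset.sum_congr rfl fun u _ => Finset.sum_congr rfl fun v _ => by ring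

theorem cyc_cycle {d : ℕ} (ρ : Matrix (Fin d) (Fin d) ℂ) (n : ℕ) :
    cyc ρ (fun i : Fin (n + 1) => i + 1) = (ρ ^ (n + 1)).trace := by
  have h := sum_path ρ n (fun x y => ρ y x)
  rw [pow_succ, Matrix.trace]
  simp only [Matrix.diag, Matrix.mul_apply]
  rw [← h, cyc]
  refine Finset.sum_congr rfl fun z _ => ?_
  rw [Fin.prod_univ_castSucc]
  simp

/-- Translation by `a` consists of cycles of length `addOrderOf a`, one for each coset of the
subgroup generated by `a`. -/
theorem cyc_addRight {d k : ℕ} [NeZero k] (ρ : Matrix (Fin d) (Fin d) ℂ) (a : ZMod k) :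
    cyc ρ (fun x => x + a) = (ρ ^ addOrderOf a).trace ^ (k / addOrderOf a) := by
  classical
  obtain ⟨n, hn⟩ : ∃ n, addOrderOf a = n + 1 :=
    Nat.exists_eq_succ_of_ne_zero (addOrderOf_pos a).ne'
  let H := AddSubgroup.zmultiples a
  let g : H → H := fun s => s + ⟨a, AddSubgroup.mem_zmultiples a⟩
  have h1 : cyc ρ (fun x => x + a) = cyc ρ (fun p : (ZMod k ⧸ H) × H => (p.1, g p.2)) := by
    let e : (ZMod k ⧸ H) × H → ZMod k := fun p => p.1.out + p.2
    have hsurj : Function.Surjective e := fun x =>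
      ⟨((x : ZMod k ⧸ H), ⟨-(x : ZMod k ⧸ H).out + x,
        QuotientAddGroup.eq.1 (QuotientAddGroup.out_eq' _)⟩), by simp [e]⟩
    have hbij : Function.Bijective e := by
      refine (Fintype.bijective_iff_surjective_and_card e).2 ⟨hsurj, ?_⟩
      have := AddSubgroup.card_eq_card_quotient_mul_card_addSubgroup H
      simpa only [Nat.card_eq_fintype_card, Fintype.card_prod] using this.symm
    refine cyc_congr ρ (Equiv.ofBijective e hbij) ?_
    rintro ⟨q, s⟩
    exact add_assoc _ _ _
  have h2 : cyc ρ g = cyc ρ (fun i : Fin (n + 1) => i + 1) := by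
    have hfin : IsOfFinAddOrder a := isOfFinAddOrder_of_finite a
    refine cyc_congr ρ ((finCongr hn.symm).trans (finEquivZMultiples hfin)) ?_
    intro i
    apply Subtype.ext
    have hval : ((i + 1 : Fin (n + 1)) : ℕ) = (i.val + 1) % (n + 1) := by
      simp [Fin.val_add]
    have : i.val • a + a = ((i + 1 : Fin (n + 1)) : ℕ) • a := by
      have hmod := mod_addOrderOf_nsmul a (i.val + 1)
      rw [hn] at hmod
      rw [hval, hmod, succ_nsmul]
    simpa [g, finEquivZMultiples_apply] using this
  have hcard : Fintype.card (ZMod k ⧸ H) = k / addOrderOf a := by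
    have := AddSubgroup.card_eq_card_quotient_mul_card_addSubgroup H
    rw [Nat.card_zmod, Nat.card_zmultiples, Nat.card_eq_fintype_card] at this
    exact (Nat.div_eq_of_eq_mul_left (addOrderOf_pos a) this).symm
  rw [h1, cyc_prod, h2, cyc_cycle, hcard, hn]

/-- For odd `k`, the reflection `x ↦ a - x` fixes only the centre `c = a / 2` and swaps the pairs
`c + j`, `c - j` for `1 ≤ j ≤ (k - 1) / 2`. -/
theorem cyc_subLeft {d k : ℕ} [NeZero k] (hodd : Odd k) (ρ : Matrix (Fin d) (Fin d) ℂ)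
    (a : ZMod k) :
    cyc ρ (fun x => a - x) = ρ.trace * (ρ ^ 2).trace ^ ((k - 1) / 2) := by
  classical
  obtain ⟨n, rfl⟩ := hodd
  -- The centre `a / 2` of the reflection: `n + 1` is the inverse of `2` modulo `2 n + 1`.
  obtain ⟨c, hc⟩ : ∃ c : ZMod (2 * n + 1), a = c + c := by
    refine ⟨a * (n + 1), ?_⟩
    have h : ((2 * n + 1 : ℕ) : ZMod (2 * n + 1)) = 0 := ZMod.natCast_self _
    push_cast at h
    linear_combination (-a) * h
  let e : Fin 1 ⊕ (Fin n × Fin 2) → ZMod (2 * n + 1) :=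
    Sum.elim (fun _ => c) fun p => if p.2 = 0 then c + ((p.1 : ℕ) + 1) else c - ((p.1 : ℕ) + 1)
  have hsurj : Function.Surjective e := by
    intro x
    have hx : ((x - c).valMinAbs : ZMod (2 * n + 1)) = x - c := ZMod.coe_valMinAbs _
    have hle := ZMod.natAbs_valMinAbs_le (x - c)
    generalize (x - c).valMinAbs = v at hx hle
    rcases lt_trichotomy v 0 with hv | hv | hv
    · refine ⟨Sum.inr (⟨v.natAbs - 1, by omega⟩, 1), ?_⟩
      obtain ⟨w, rfl⟩ : ∃ w : ℕ, v = -(w + 1 : ℤ) := ⟨v.natAbs - 1, by omega⟩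
      have : (-(w + 1 : ℤ)).natAbs - 1 = w := by omega
      simp only [e, Sum.elim_inr, this]
      push_cast at hx
      simp
      linear_combination hx
    · refine ⟨Sum.inl 0, ?_⟩
      simp only [e, Sum.elim_inl]
      subst hv
      push_cast at hx
      linear_combination hx
    · refine ⟨Sum.inr (⟨v.natAbs - 1, by omega⟩, 0), ?_⟩
      obtain ⟨w, rfl⟩ : ∃ w : ℕ, v = (w + 1 : ℤ) := ⟨v.natAbs - 1, by omega⟩
      have : (w + 1 : ℤ).natAbs - 1 = w := by omega
      simp only [e, Sum.elim_inr, this]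
      push_cast at hx
      simp
      linear_combination hx
  have hbij : Function.Bijective e :=
    (Fintype.bijective_iff_surjective_and_card e).2 ⟨hsurj, by simp [add_comm, mul_comm]⟩
  have h1 : cyc ρ (fun x => a - x)
      = cyc ρ (Sum.map (fun i : Fin (0 + 1) => i + 1)
          (fun p : Fin n × Fin (1 + 1) => (p.1, p.2 + 1))) := by
    refine cyc_congr ρ (Equiv.ofBijective e hbij) ?_
    rintro (i | ⟨i, j⟩)
    · simp [e, hc]
    · fin_cases j <;> simp [e, hc]
  rw [h1, cyc_sum, cyc_prod ρ (fun j : Fin (1 + 1) => j + 1), cyc_cycle, cyc_cycle]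
  simp

theorem acceptance_prob_dihedral_group_odd (d k : ℕ) (hd : 1 ≤ d) [NeZero k]
    (hk : 3 ≤ k) (hodd : Odd k)
    (ρ : Matrix (Fin d) (Fin d) ℂ) (hρ : ρ.PosSemidef) (htr : ρ.trace = 1) :
    (1 / (2 * k : ℂ)) *
        ∑ a : ZMod k,
          ((permOp d (Equiv.addRight a) * tensorPow ρ (ZMod k)).trace +
            (permOp d (Equiv.subLeft a) * tensorPow ρ (ZMod k)).trace)
      = (1 / 2 : ℂ) * ((1 / (k : ℂ)) *
            ∑ m ∈ Nat.divisors k, (Nat.totient m : ℂ) * ((ρ ^ m).trace) ^ (k / m))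
        + (1 / 2 : ℂ) * ((ρ ^ 2).trace) ^ ((k - 1) / 2) := by
  have hk0 : (k : ℂ) ≠ 0 := Nat.cast_ne_zero.2 (NeZero.ne k)
  have hrot : ∀ a : ZMod k, (permOp d (Equiv.addRight a) * tensorPow ρ (ZMod k)).trace
      = (ρ ^ addOrderOf a).trace ^ (k / addOrderOf a) := fun a =>
    (trace_permOp_mul ρ _).trans (cyc_addRight ρ a)
  have hrefl : ∀ a : ZMod k, (permOp d (Equiv.subLeft a) * tensorPow ρ (ZMod k)).trace
      = (ρ ^ 2).trace ^ ((k - 1) / 2) := fun a =>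
    (trace_permOp_mul ρ _).trans ((cyc_subLeft hodd ρ a).trans (by rw [htr, one_mul]))
  have hsum : ∑ a : ZMod k, (ρ ^ addOrderOf a).trace ^ (k / addOrderOf a)
      = ∑ m ∈ Nat.divisors k, (Nat.totient m : ℂ) * ((ρ ^ m).trace) ^ (k / m) := by
    have hdvd : ∀ a : ZMod k, addOrderOf a ∣ k := fun a => by
      simpa [ZMod.card] using addOrderOf_dvd_card (x := a)
    rw [← Finset.sum_fiberwise_of_maps_to (s := Finset.univ) (t := Nat.divisors k)
      (g := fun a : ZMod k => addOrderOf a)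
      (fun a _ => Nat.mem_divisors.2 ⟨hdvd a, NeZero.ne k⟩)]
    refine Finset.sum_congr rfl fun m hm => ?_
    rw [Finset.sum_congr rfl (g := fun _ => (ρ ^ m).trace ^ (k / m)), Finset.sum_const,
      nsmul_eq_mul, IsAddCyclic.card_addOrderOf_eq_totient]
    · simpa [ZMod.card] using Nat.dvd_of_mem_divisors hm
    · intro a ha
      rw [(Finset.mem_filter.1 ha).2]
  simp only [hrot, hrefl]
  rw [Finset.sum_add_distrib, hsum, Finset.sum_const, Finset.card_univ, ZMod.card, nsmul_eq_mul]
  field_simp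
end

section
/- Let d ≥ 1, let ρ be a d×d complex Hermitian positive semidefinite matrix with tr(ρ) = 1, and let k ≥ 2 be even. Index the tensor factors by ZMod k; for a : ZMod k let r_a be the rotation x ↦ x + a and s_a the reflection x ↦ a − x (2k permutations in total, forming the dihedral group D_k). Then (1/(2k)) ∑_{a : ZMod k} [tr(W(r_a) * ρ^{⊗ ZMod k}) + tr(W(s_a) * ρ^{⊗ ZMod k})] = (1/2)·(1/k) ∑_{m | k} φ(m) (tr(ρ^m))^{k/m} + (1/4)·[(tr(ρ^2))^{(k−2)/2} + (tr(ρ^2))^{k/2}]. -/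
/-!
Diagonalize `ρ`. Since `W(π)` commutes with `V^{⊗ι}`, the trace `tr(W(π) ρ^{⊗ι})` only depends on
the eigenvalues, and for a diagonal matrix only the multi-indices constant on the orbits of `π`
contribute. Hence `tr(W(π) ρ^{⊗ι}) = ∏ tr(ρ^|o|)`, the product running over the orbits `o` of `π`
(`trace_permOp_mul_tensorPow`).

The orbits of the rotation by `a` are the cosets of the subgroup generated by `a`, and `ZMod k` has
`φ(m)` elements of order `m` for each `m ∣ k` (`sum_trace_rotation`). The reflection `x ↦ a - x` is
an involution. With `k = 2n` it has two fixed points for the `n` even values of `a` and none for the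
`n` odd ones; fixed points contribute `tr ρ = 1` and the other orbits `tr(ρ²)`
(`sum_trace_reflection`).
-/

open Matrix
open scoped ComplexOrder

/-! ### Traces of permutation operators as products over orbits -/

theorem tensorPow_mul {d : ℕ} (A B : Matrix (Fin d) (Fin d) ℂ) (ι : Type) [Fintype ι]
    [DecidableEq ι] : tensorPow (A * B) ι = tensorPow A ι * tensorPow B ι := by
  ext x y
  simp only [tensorPow, Matrix.mul_apply, Matrix.of_apply, ← Finset.prod_mul_distrib]
  rw [Finset.prod_univ_sum, Fintype.piFinset_univ]

theorem tensorPow_one {d : ℕ} (ι : Type) [Fintype ι] [DecidableEq ι] :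
    tensorPow (1 : Matrix (Fin d) (Fin d) ℂ) ι = 1 := by
  ext x y
  simp only [tensorPow, Matrix.of_apply, Matrix.one_apply, Finset.prod_ite_zero, funext_iff]
  simp

theorem permOp_mul_tensorPow_comm {d : ℕ} (A : Matrix (Fin d) (Fin d) ℂ) {ι : Type} [Fintype ι]
    [DecidableEq ι] (π : Equiv.Perm ι) :
    permOp d π * tensorPow A ι = tensorPow A ι * permOp d π := by
  ext x y
  have h (z : ι → Fin d) : x = z ∘ π ↔ z = x ∘ π.symm :=
    ⟨fun h => by ext; simp [h], fun h => by ext; simp [h]⟩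
  simp only [tensorPow, permOp, Matrix.mul_apply, Matrix.of_apply, h, ite_mul, mul_ite, one_mul,
    zero_mul, mul_one, mul_zero, Finset.sum_ite_eq', Finset.mem_univ, if_true]
  rw [← Equiv.prod_comp π]
  simp

/-- The trace `tr(W(π) ρ^{⊗ι})` is unchanged when `ρ` is replaced by a similar matrix, because
`W(π)` commutes with `V^{⊗ι}`. -/
theorem trace_permOp_mul_tensorPow_conj {d : ℕ} (V D V' : Matrix (Fin d) (Fin d) ℂ)
    (hV : V' * V = 1) {ι : Type} [Fintype ι] [DecidableEq ι] (π : Equiv.Perm ι) :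
    (permOp d π * tensorPow (V * D * V') ι).trace = (permOp d π * tensorPow D ι).trace := by
  rw [tensorPow_mul, ← Matrix.mul_assoc, Matrix.trace_mul_comm, tensorPow_mul,
    ← Matrix.mul_assoc (permOp d π), permOp_mul_tensorPow_comm, Matrix.mul_assoc (tensorPow V ι),
    ← Matrix.mul_assoc, ← tensorPow_mul, hV, tensorPow_one, Matrix.one_mul]

/-- For a diagonal matrix only the multi-indices fixed by `π` contribute to
`tr(W(π) D^{⊗ι})`; these are the functions of the orbit map `q`, so the sum factors over the
orbits. -/
theorem trace_permOp_mul_tensorPow_diagonal {d : ℕ} (l : Fin d → ℂ) {ι κ : Type} [Fintype ι]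
    [DecidableEq ι] [Fintype κ] [DecidableEq κ] (π : Equiv.Perm ι) (q : ι → κ)
    (hq : Function.Surjective q) (hπ : ∀ i, q (π i) = q i)
    (hfac : ∀ y : ι → Fin d, y = y ∘ π → ∀ i j, q i = q j → y i = y j) :
    (permOp d π * tensorPow (Matrix.diagonal l) ι).trace =
      ∏ c : κ, ∑ j, l j ^ (Finset.univ.filter fun i => q i = c).card := by
  have h1 : (permOp d π * tensorPow (Matrix.diagonal l) ι).trace =
      ∑ y ∈ Finset.univ.filter (fun y : ι → Fin d => y = y ∘ π), ∏ i, l (y i) := by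
    simp only [Matrix.trace, Matrix.diag, permOp, tensorPow, Matrix.mul_apply, Matrix.of_apply,
      ite_mul, one_mul, zero_mul]
    rw [Finset.sum_comm, Finset.sum_filter]
    refine Finset.sum_congr rfl fun y _ => ?_
    rw [Finset.sum_ite_eq', if_pos (Finset.mem_univ _)]
    simp only [Finset.mem_univ, Matrix.diagonal_apply,
      Finset.prod_ite_zero, funext_iff, Function.comp_apply, true_imp_iff]
  rw [h1, Finset.prod_univ_sum, Fintype.piFinset_univ]
  symm
  refine Finset.sum_bij' (fun z _ => z ∘ q) (fun y _ => y ∘ Function.surjInv hq) ?_ ?_ ?_ ?_ ?_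
  · intro z _
    simp [funext_iff, hπ]
  · simp
  · intro z _
    ext c
    simp [Function.surjInv_eq hq]
  · intro y hy
    funext i
    exact hfac y (Finset.mem_filter.1 hy).2 _ _ (Function.surjInv_eq hq _)
  · intro z _
    simp only [Function.comp_apply]
    rw [← Fintype.prod_fiberwise' q (fun c => l (z c))]
    simp [Fintype.card_subtype]

/-- `tr(W(π) ρ^{⊗ι})` is the product over the orbits of `π` (the fibres of `q`) of
`tr(ρ^m)`, with `m` the size of the orbit. -/
theorem trace_permOp_mul_tensorPow_s16 {d : ℕ} {ρ : Matrix (Fin d) (Fin d) ℂ} (hρ : ρ.PosSemidef)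
    {ι κ : Type} [Fintype ι]
    [DecidableEq ι] [Fintype κ] [DecidableEq κ] (π : Equiv.Perm ι) (q : ι → κ)
    (hq : Function.Surjective q) (hπ : ∀ i, q (π i) = q i)
    (hfac : ∀ y : ι → Fin d, y = y ∘ π → ∀ i j, q i = q j → y i = y j) :
    (permOp d π * tensorPow ρ ι).trace =
      ∏ c : κ, (ρ ^ (Finset.univ.filter fun i => q i = c).card).trace := by
  obtain ⟨V, V', l, hV, hρV⟩ : ∃ (V V' : Matrix (Fin d) (Fin d) ℂ) (l : Fin d → ℂ),
      V' * V = 1 ∧ ρ = V * Matrix.diagonal l * V' := by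
    refine ⟨hρ.1.eigenvectorUnitary, star (hρ.1.eigenvectorUnitary : Matrix _ _ ℂ), _, ?_,
      hρ.1.spectral_theorem⟩
    simp
  have hpow (m : ℕ) : (ρ ^ m).trace = ∑ j, l j ^ m := by
    have : ρ ^ m = V * Matrix.diagonal l ^ m * V' := by
      induction m with
      | zero => simp [mul_eq_one_comm.1 hV]
      | succ m ih =>
        rw [pow_succ, ih, hρV, pow_succ]
        simp only [Matrix.mul_assoc]
        rw [← Matrix.mul_assoc V' V, hV, Matrix.one_mul]
    rw [this, Matrix.trace_mul_comm, ← Matrix.mul_assoc, hV, Matrix.one_mul,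
      Matrix.diagonal_pow, Matrix.trace_diagonal]
    simp
  simp only [hpow]
  rw [hρV, trace_permOp_mul_tensorPow_conj _ _ _ hV,
    trace_permOp_mul_tensorPow_diagonal l π q hq hπ hfac]

/-! ### Orbits of rotations and of involutions -/

/-- The orbits of `x ↦ x + a` are the cosets of the subgroup generated by `a`. -/
theorem trace_rotation {d k : ℕ} [NeZero k] {ρ : Matrix (Fin d) (Fin d) ℂ} (hρ : ρ.PosSemidef)
    (a : ZMod k) :
    (permOp d (Equiv.addRight a) * tensorPow ρ (ZMod k)).trace =
      (ρ ^ addOrderOf a).trace ^ (k / addOrderOf a) := by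
  classical
  let H := AddSubgroup.zmultiples a
  have : Fintype (ZMod k ⧸ H) := Fintype.ofFinite _
  have hcard : Fintype.card (ZMod k ⧸ H) = k / addOrderOf a := by
    have h := AddSubgroup.card_eq_card_quotient_mul_card_addSubgroup H
    rw [Nat.card_zmod, Nat.card_zmultiples, Nat.card_eq_fintype_card] at h
    exact (Nat.div_eq_of_eq_mul_left (addOrderOf_pos a) h).symm
  rw [trace_permOp_mul_tensorPow_s16 hρ _ (QuotientAddGroup.mk (s := H))
    QuotientAddGroup.mk_surjective]
  · rw [← hcard, ← Finset.card_univ, ← Finset.prod_const]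
    refine Finset.prod_congr rfl fun c _ => ?_
    obtain ⟨b, rfl⟩ := QuotientAddGroup.mk_surjective c
    congr 2
    rw [← Nat.card_zmultiples, Nat.card_eq_fintype_card, ← Fintype.card_subtype]
    refine Fintype.card_congr ⟨fun x => ⟨-b + x.1, QuotientAddGroup.eq.1 x.2.symm⟩,
      fun x => ⟨b + x.1, QuotientAddGroup.eq.2 ?_⟩, fun x => by simp, fun x => by simp⟩
    simp
  · intro i
    refine QuotientAddGroup.eq.2 ?_
    simp [H]
  · intro y hy i j hij
    obtain ⟨n, hn⟩ := AddSubgroup.mem_zmultiples_iff.1 (QuotientAddGroup.eq.1 hij)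
    have hy' (x : ZMod k) : y (x + a) = y x := (congrFun hy x).symm
    have hper : Function.Periodic y a := hy'
    have hj : j = i + n • a := by rw [hn]; abel
    rw [hj, hper.zsmul n i]

/-- The two-element orbits of an involution are half as many as the points it moves; the
one-element orbits contribute `tr ρ = 1`. -/
theorem trace_involution {d : ℕ} {ρ : Matrix (Fin d) (Fin d) ℂ} (hρ : ρ.PosSemidef)
    (htr : ρ.trace = 1) {ι : Type} [Fintype ι] [DecidableEq ι] (π : Equiv.Perm ι)
    (hinv : ∀ i, π (π i) = i) :
    (permOp d π * tensorPow ρ ι).trace =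
      (ρ ^ 2).trace ^ ((Finset.univ.filter fun i => π i ≠ i).card / 2) := by
  classical
  let S : Setoid ι :=
    { r := fun i j => j = i ∨ j = π i
      iseqv :=
        { refl := fun i => Or.inl rfl
          symm := by
            rintro i j (rfl | rfl)
            · exact Or.inl rfl
            · exact Or.inr (hinv i).symm
          trans := by
            rintro i j l (rfl | rfl) (rfl | rfl)
            · exact Or.inl rfl
            · exact Or.inr rfl
            · exact Or.inr rfl
            · exact Or.inl (hinv i) } }
  let q : ι → Quotient S := Quotient.mk S
  have hqe (i j : ι) : q i = q j ↔ j = i ∨ j = π i := Quotient.eq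
  have hfib (j : ι) : (Finset.univ.filter fun i => q i = q j) = {j, π j} := by
    ext i
    rw [Finset.mem_filter, eq_comm, hqe]
    simp
  have hfibcard (j : ι) : (Finset.univ.filter fun i => q i = q j).card =
      if π j ≠ j then 2 else 1 := by
    rw [hfib]
    split_ifs with h
    · exact Finset.card_pair (Ne.symm h)
    · simp [not_not.1 h]
  rw [trace_permOp_mul_tensorPow_s16 hρ π q Quotient.mk_surjective]
  · have h1 (c : Quotient S) : (ρ ^ (Finset.univ.filter fun i => q i = c).card).trace =
        if (Finset.univ.filter fun i => q i = c).card = 2 then (ρ ^ 2).trace else 1 := by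
      obtain ⟨j, rfl⟩ := Quotient.mk_surjective c
      change (ρ ^ (Finset.univ.filter fun i => q i = q j).card).trace =
        if (Finset.univ.filter fun i => q i = q j).card = 2 then (ρ ^ 2).trace else 1
      rw [hfibcard]
      split_ifs <;> simp_all
    simp only [h1]
    rw [← Finset.prod_filter, Finset.prod_const]
    congr 1
    -- Each two-element orbit accounts for exactly two of the points moved by `π`.
    have h2 := Finset.card_eq_sum_card_fiberwise (f := q)
      (s := Finset.univ.filter fun i => π i ≠ i)
      (t := Finset.univ.filter fun c => (Finset.univ.filter fun i => q i = c).card = 2)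
      (by
        intro i hi
        have hi' : π i ≠ i := by simpa using hi
        simp only [Finset.coe_filter, Finset.mem_univ, true_and, Set.mem_ofPred_eq]
        rw [hfibcard, if_pos hi'])
    have h3 : ∀ c ∈ Finset.univ.filter fun c => (Finset.univ.filter fun i => q i = c).card = 2,
        ((Finset.univ.filter fun i => π i ≠ i).filter fun i => q i = c).card = 2 := by
      intro c hc
      have hc := (Finset.mem_filter.1 hc).2
      rw [← hc, Finset.filter_filter]
      congr 1
      ext i
      simp only [Finset.mem_filter, Finset.mem_univ, true_and, and_iff_right_iff_imp]
      rintro rfl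
      rw [hfibcard] at hc
      by_contra h
      simp [h] at hc
    rw [Finset.sum_congr rfl h3, Finset.sum_const, smul_eq_mul] at h2
    omega
  · intro i
    exact ((hqe i (π i)).2 (Or.inr rfl)).symm
  · intro y hy i j hij
    rcases (hqe i j).1 hij with rfl | rfl
    · rfl
    · exact congrFun hy i

/-! ### Fixed points of reflections of `ℤ/2n` -/

/-- In `ℤ/2n`, the equation `2x = 2i` has the two solutions `i` and `i + n`. -/
theorem card_moved_even (n : ℕ) [NeZero (2 * n)] (i : ℕ) :
    (Finset.univ.filter fun x : ZMod (2 * n) =>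
      Equiv.subLeft ((2 * i : ℕ) : ZMod (2 * n)) x ≠ x).card = 2 * n - 2 := by
  have hn : 0 < n := by have := NeZero.pos (2 * n); omega
  have h0 : ((n : ℕ) : ZMod (2 * n)) ≠ 0 := by
    rw [Ne, ZMod.natCast_eq_zero_iff]
    intro h
    have := Nat.le_of_dvd hn h
    omega
  have h2 : (Finset.univ.filter fun x : ZMod (2 * n) =>
      Equiv.subLeft ((2 * i : ℕ) : ZMod (2 * n)) x ≠ x) =
        ({(i : ZMod (2 * n)), (i : ZMod (2 * n)) + n} : Finset (ZMod (2 * n)))ᶜ := by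
    ext x
    simp only [Finset.mem_filter, Finset.mem_univ, true_and, Finset.mem_compl,
      Finset.mem_insert, Finset.mem_singleton, Equiv.subLeft_apply, ne_eq, not_iff_not]
    have hnn : (n : ZMod (2 * n)) + n = 0 := by
      have := ZMod.natCast_self (2 * n)
      push_cast at this
      rw [← this]; ring
    constructor
    · intro h
      obtain ⟨y, rfl⟩ : ∃ y : ZMod (2 * n), x = i + y := ⟨x - i, by ring⟩
      have hy : y + y = 0 := by
        push_cast at h
        linear_combination -h
      obtain ⟨m, rfl⟩ := ZMod.natCast_zmod_surjective y
      rw [← Nat.cast_add, ZMod.natCast_eq_zero_iff] at hy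
      obtain ⟨c, hc⟩ := hy
      have hm : m = n * c := by linarith
      rcases Nat.even_or_odd' c with ⟨e, rfl | rfl⟩
      · left
        rw [hm]; push_cast
        linear_combination (e : ZMod (2 * n)) * hnn
      · right
        rw [hm]; push_cast
        linear_combination (e : ZMod (2 * n)) * hnn
    · rintro (rfl | rfl)
      · push_cast; ring
      · push_cast; linear_combination -hnn
  rw [h2, Finset.card_compl, ZMod.card, Finset.card_pair]
  intro h
  exact h0 (by linear_combination -h)

/-- In `ℤ/2n`, the equation `2x = 2i + 1` has no solution, by parity. -/
theorem card_moved_odd (n : ℕ) [NeZero (2 * n)] (i : ℕ) :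
    (Finset.univ.filter fun x : ZMod (2 * n) =>
      Equiv.subLeft ((2 * i + 1 : ℕ) : ZMod (2 * n)) x ≠ x).card = 2 * n := by
  rw [Finset.filter_true_of_mem, Finset.card_univ, ZMod.card]
  intro x _ h
  obtain ⟨m, rfl⟩ := ZMod.natCast_zmod_surjective x
  rw [Equiv.subLeft_apply, sub_eq_iff_eq_add, ← Nat.cast_add, ZMod.natCast_eq_natCast_iff] at h
  have h' := Nat.ModEq.of_mul_right n h
  unfold Nat.ModEq at h'
  omega

theorem sum_zmod_two_mul (n : ℕ) [NeZero (2 * n)] (f : ZMod (2 * n) → ℂ) :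
    ∑ a, f a = ∑ i ∈ Finset.range n, (f ((2 * i : ℕ)) + f ((2 * i + 1 : ℕ))) := by
  have h1 : ∑ a, f a = ∑ j ∈ Finset.range (2 * n), f (j : ℕ) := by
    symm
    refine Finset.sum_bij' (fun j _ => (j : ZMod (2 * n))) (fun a _ => a.val) ?_ ?_ ?_ ?_ ?_
    · simp
    · intro a _
      exact Finset.mem_range.2 (ZMod.val_lt a)
    · intro j hj
      exact ZMod.val_cast_of_lt (Finset.mem_range.1 hj)
    · simp
    · simp
  have h2 (g : ℕ → ℂ) (n : ℕ) : ∑ j ∈ Finset.range (2 * n), g j =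
      ∑ i ∈ Finset.range n, (g (2 * i) + g (2 * i + 1)) := by
    induction n with
    | zero => simp
    | succ n ih =>
      rw [mul_add, Finset.sum_range_succ, Finset.sum_range_succ, ih, Finset.sum_range_succ]
      ring
  rw [h1, h2]

/-! ### Sums over the dihedral group -/

theorem sum_trace_rotation {d k : ℕ} [NeZero k] {ρ : Matrix (Fin d) (Fin d) ℂ}
    (hρ : ρ.PosSemidef) :
    ∑ a : ZMod k, (permOp d (Equiv.addRight a) * tensorPow ρ (ZMod k)).trace =
      ∑ m ∈ Nat.divisors k, (Nat.totient m : ℂ) * ((ρ ^ m).trace) ^ (k / m) := by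
  simp only [trace_rotation hρ]
  rw [← Finset.sum_fiberwise_of_maps_to (s := Finset.univ) (t := Nat.divisors k)
    (g := fun a : ZMod k => addOrderOf a)]
  · refine Finset.sum_congr rfl fun m hm => ?_
    have hcard : (Finset.univ.filter fun a : ZMod k => addOrderOf a = m).card = m.totient :=
      IsAddCyclic.card_addOrderOf_eq_totient (by simpa using Nat.dvd_of_mem_divisors hm)
    rw [← hcard, ← nsmul_eq_mul, ← Finset.sum_const]
    refine Finset.sum_congr rfl fun a ha => ?_
    rw [(Finset.mem_filter.1 ha).2]
  · intro a _
    refine Nat.mem_divisors.2 ⟨?_, NeZero.ne k⟩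
    simpa using addOrderOf_dvd_card (x := a)

theorem sum_trace_reflection {d n : ℕ} [NeZero (2 * n)] {ρ : Matrix (Fin d) (Fin d) ℂ}
    (hρ : ρ.PosSemidef) (htr : ρ.trace = 1) :
    ∑ a : ZMod (2 * n), (permOp d (Equiv.subLeft a) * tensorPow ρ (ZMod (2 * n))).trace =
      n * ((ρ ^ 2).trace ^ ((2 * n - 2) / 2) + (ρ ^ 2).trace ^ (2 * n / 2)) := by
  have h (a : ZMod (2 * n)) := trace_involution hρ htr (Equiv.subLeft a) (fun i => by simp)
  simp only [h]
  rw [sum_zmod_two_mul]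
  simp only [card_moved_even, card_moved_odd]
  rw [Finset.sum_const, Finset.card_range, nsmul_eq_mul]

theorem acceptance_prob_dihedral_group_even (d k : ℕ) (hd : 1 ≤ d) [NeZero k]
    (hk : 2 ≤ k) (heven : Even k)
    (ρ : Matrix (Fin d) (Fin d) ℂ) (hρ : ρ.PosSemidef) (htr : ρ.trace = 1) :
    (1 / (2 * k : ℂ)) *
        ∑ a : ZMod k,
          ((permOp d (Equiv.addRight a) * tensorPow ρ (ZMod k)).trace +
            (permOp d (Equiv.subLeft a) * tensorPow ρ (ZMod k)).trace)
      = (1 / 2 : ℂ) * ((1 / (k : ℂ)) *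
            ∑ m ∈ Nat.divisors k, (Nat.totient m : ℂ) * ((ρ ^ m).trace) ^ (k / m))
        + (1 / 4 : ℂ) *
            (((ρ ^ 2).trace) ^ ((k - 2) / 2) + ((ρ ^ 2).trace) ^ (k / 2)) := by
  have hk0 : (k : ℂ) ≠ 0 := Nat.cast_ne_zero.2 (NeZero.ne k)
  rw [Finset.sum_add_distrib, sum_trace_rotation hρ]
  obtain ⟨n, rfl⟩ : ∃ n, k = 2 * n := heven.exists_two_nsmul.imp fun n h => by simpa using h
  rw [sum_trace_reflection hρ htr]
  push_cast at hk0 ⊢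
  have hn0 : (n : ℂ) ≠ 0 := right_ne_zero_of_mul hk0
  field_simp
  ring
end
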